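/- arXiv:1708.04122 — 3 statements merged into one kernel-verified Lean document; each statement's English description precedes it below -/
import Mathlib

section
/- There exists an even, real-valued, continuous function G ∈ L¹(ℝ) with supp(Ĝ) ⊆ [−1,1] and G(0) = 1 that extremizes the problem defining 𝒞(∞), i.e., |G(0)|/‖G‖₁ = 𝒞(∞). -/
open MeasureTheory Filter
open scoped FourierTransform Real

/-- The class 𝒜 sharp constant 𝒞(A). -/
noncomputable def Ccal (A : ℝ) : ℝ :=
  sSup { r : ℝ | ∃ F : ℝ → ℂ, Continuous F ∧ Integrable F ∧ F ≠ 0 ∧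
    r = (‖F 0‖ - A * ∫ t in {t : ℝ | 1 ≤ |t|}, ‖𝓕 F t‖) / ∫ x : ℝ, ‖F x‖ }

/-- 𝒞(∞), over the bandlimited class ℰ. -/
noncomputable def CcalInf : ℝ :=
  sSup { r : ℝ | ∃ F : ℝ → ℂ, Continuous F ∧ Integrable F ∧ F ≠ 0 ∧
    Function.support (𝓕 F) ⊆ Set.Icc (-1 : ℝ) 1 ∧
    r = ‖F 0‖ / ∫ x : ℝ, ‖F x‖ }

/-- Fourier transform of a real-valued function, as a real number (its real part). -/
noncomputable def FTr (F : ℝ → ℝ) (t : ℝ) : ℝ := (𝓕 (fun x => (F x : ℂ)) t).re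

/-- The class 𝒜⁺ sharp constant 𝒞⁺(A). -/
noncomputable def CcalPlus (A : ℝ) : ℝ :=
  sSup { r : ℝ | ∃ F : ℝ → ℝ, Continuous F ∧ Integrable F ∧ F ≠ 0 ∧ (∀ x, F (-x) = F x) ∧
    r = (F 0 - A * ∫ t in {t : ℝ | 1 ≤ |t|}, max (FTr F t) 0) / ∫ x : ℝ, |F x| }

/-- 𝒞⁺(∞), over the class ℰ⁺. -/
noncomputable def CcalPlusInf : ℝ :=
  sSup { r : ℝ | ∃ F : ℝ → ℝ, Continuous F ∧ Integrable F ∧ F ≠ 0 ∧ (∀ x, F (-x) = F x) ∧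
    (∀ t : ℝ, 1 ≤ |t| → FTr F t ≤ 0) ∧
    r = F 0 / ∫ x : ℝ, |F x| }

/-- The prime counting function at a real argument. -/
noncomputable def primePi (x : ℝ) : ℕ := Nat.primeCounting ⌊x⌋₊

/-- The Brun–Titchmarsh constant 𝐁. -/
noncomputable def BrunTitchmarsh : ℝ :=
  limsup (fun x : ℝ =>
    ((primePi (x + Real.sqrt x) : ℝ) - (primePi x : ℝ)) / (Real.sqrt x / Real.log x)) atTop

/-!
By Fourier inversion, a function `F` whose transform lives on a compact set `K` is the inverse
transform of a function supported on `K` and bounded by `‖F‖₁`. Hence functions with spectrum in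
`K` and `‖F‖₁ ≤ 1` are uniformly bounded and uniformly Lipschitz, and by Arzelà–Ascoli a maximizing
sequence has a locally uniform limit. Fatou's lemma keeps the `L¹` norm of the limit at most `1`,
and pairing with test functions supported off `K` (where `∫ φ 𝓕 F = ∫ (𝓕 φ) F` passes to the limit
by dominated convergence) keeps its spectrum in `K`, so the limit is extremal. Dividing by its value
at `0` makes that value `1`; passing to the real part of the even part then preserves it and does
not increase the `L¹` norm.
-/

open Set Topology
open scoped ComplexConjugate ContDiff ENNReal Pointwise

theorem exists_subseq_tendsto_of_equicontinuous {X α : Type*} [TopologicalSpace X]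
    [WeaklyLocallyCompactSpace X] [SigmaCompactSpace X] [MetricSpace α] [ProperSpace α]
    {f : ℕ → C(X, α)} (hf : Equicontinuous fun n => ⇑(f n))
    (hb : ∀ x, Bornology.IsBounded (range fun n => f n x)) :
    ∃ (g : C(X, α)) (φ : ℕ → ℕ), StrictMono φ ∧ Tendsto (f ∘ φ) atTop (𝓝 g) := by
  have hclosed : IsClosedEmbedding
      (ContinuousMap.toUniformOnFunIsCompact : C(X, α) → _) := by
    refine ⟨ContinuousMap.isUniformEmbedding_toUniformOnFunIsCompact.isEmbedding, ?_⟩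
    rw [ContinuousMap.range_toUniformOnFunIsCompact]
    exact UniformOnFun.isClosed_setOfPred_continuous CompactlyCoherentSpace.isCoherentWith
  have hrange : Equicontinuous fun h : range f => ⇑h.1 := fun x U hU => by
    filter_upwards [hf x U hU] with y hy
    rintro ⟨_, n, rfl⟩
    exact hy n
  have hcompact : IsCompact (closure (range f)) :=
    ArzelaAscoli.isCompact_closure_of_isClosedEmbedding (fun _ hK => hK) hclosed
      (fun K _ => hrange.equicontinuousOn K)
      fun K _ x _ => ⟨closure (range fun n => f n x), (hb x).isCompact_closure, by
        rintro _ ⟨n, rfl⟩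
        exact subset_closure ⟨n, rfl⟩⟩
  obtain ⟨g, -, φ, hφ, hlim⟩ := hcompact.tendsto_subseq fun n => subset_closure (mem_range_self n)
  exact ⟨g, φ, hφ, hlim⟩

section Fatou

variable {α E : Type*} [MeasurableSpace α] {μ : Measure α} [NormedAddCommGroup E]
  {f : ℕ → α → E} {g : α → E}

theorem lintegral_enorm_le_of_tendsto_ae {C : ℝ≥0∞} (hf : ∀ n, AEStronglyMeasurable (f n) μ)
    (hC : ∀ n, ∫⁻ x, ‖f n x‖ₑ ∂μ ≤ C)
    (hlim : ∀ᵐ x ∂μ, Tendsto (fun n => f n x) atTop (𝓝 (g x))) :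
    ∫⁻ x, ‖g x‖ₑ ∂μ ≤ C :=
  calc ∫⁻ x, ‖g x‖ₑ ∂μ = ∫⁻ x, liminf (fun n => ‖f n x‖ₑ) atTop ∂μ :=
        lintegral_congr_ae (hlim.mono fun _ hx => hx.enorm.liminf_eq.symm)
    _ ≤ liminf (fun n => ∫⁻ x, ‖f n x‖ₑ ∂μ) atTop := lintegral_liminf_le' fun n => (hf n).enorm
    _ ≤ C := liminf_le_of_frequently_le' (Frequently.of_forall hC)

theorem integrable_and_integral_norm_le_of_tendsto_ae {C : ℝ} (hf : ∀ n, Integrable (f n) μ)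
    (hC : ∀ n, ∫ x, ‖f n x‖ ∂μ ≤ C)
    (hlim : ∀ᵐ x ∂μ, Tendsto (fun n => f n x) atTop (𝓝 (g x))) :
    Integrable g μ ∧ ∫ x, ‖g x‖ ∂μ ≤ C := by
  have hle : ∫⁻ x, ‖g x‖ₑ ∂μ ≤ ENNReal.ofReal C :=
    lintegral_enorm_le_of_tendsto_ae (fun n => (hf n).aestronglyMeasurable) (fun n => by
      rw [← ofReal_integral_norm_eq_lintegral_enorm (hf n)]
      exact ENNReal.ofReal_le_ofReal (hC n)) hlim
  have hint : Integrable g μ :=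
    ⟨aestronglyMeasurable_of_tendsto_ae _ (fun n => (hf n).aestronglyMeasurable) hlim,
      hle.trans_lt ENNReal.ofReal_lt_top⟩
  rw [← ofReal_integral_norm_eq_lintegral_enorm hint] at hle
  exact ⟨hint, (ENNReal.ofReal_le_ofReal_iff
    ((integral_nonneg fun x => norm_nonneg (f 0 x)).trans (hC 0))).1 hle⟩

end Fatou

theorem eqOn_zero_of_integral_contDiff_smul_eq_zero {V E : Type*} [NormedAddCommGroup V]
    [NormedSpace ℝ V] [FiniteDimensional ℝ V] [MeasurableSpace V] [BorelSpace V]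
    [NormedAddCommGroup E] [NormedSpace ℝ E] [CompleteSpace E] {μ : Measure V}
    [IsLocallyFiniteMeasure μ] [μ.IsOpenPosMeasure] {f : V → E} {U : Set V}
    (hU : IsOpen U) (hf : ContinuousOn f U)
    (h : ∀ φ : V → ℝ, ContDiff ℝ ∞ φ → HasCompactSupport φ → tsupport φ ⊆ U →
      ∫ x, φ x • f x ∂μ = 0) :
    EqOn f 0 U := by
  have hae : ∀ᵐ x ∂μ, x ∈ U → f x = 0 :=
    hU.ae_eq_zero_of_integral_contDiff_smul_eq_zero
      (hf.locallyIntegrableOn hU.measurableSet) h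
  exact Measure.eqOn_open_of_ae_eq ((ae_restrict_iff' hU.measurableSet).2 hae) hU hf
    continuousOn_const

section EvenPart

variable {G E : Type*} [AddGroup G]

/-- The even part `x ↦ (f x + f (-x)) / 2` of a function, used to make an extremizer even. -/
noncomputable def evenPart [AddCommGroup E] [Module ℝ E] (f : G → E) (x : G) : E :=
  (2⁻¹ : ℝ) • (f x + f (-x))

theorem evenPart_neg [AddCommGroup E] [Module ℝ E] (f : G → E) (x : G) :
    evenPart f (-x) = evenPart f x := by
  simp only [evenPart, neg_neg, add_comm]

theorem evenPart_zero [AddCommGroup E] [Module ℝ E] (f : G → E) : evenPart f 0 = f 0 := by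
  rw [evenPart, neg_zero, ← two_smul ℝ, inv_smul_smul₀ two_ne_zero]

theorem integral_norm_evenPart_le [MeasurableSpace G] [MeasurableNeg G] {μ : Measure G}
    [μ.IsNegInvariant] [NormedAddCommGroup E] [NormedSpace ℝ E] {f : G → E}
    (hf : Integrable f μ) : ∫ x, ‖evenPart f x‖ ∂μ ≤ ∫ x, ‖f x‖ ∂μ := by
  have hneg : Integrable (fun x => ‖f (-x)‖) μ := hf.norm.comp_neg
  calc ∫ x, ‖evenPart f x‖ ∂μ ≤ ∫ x, 2⁻¹ * (‖f x‖ + ‖f (-x)‖) ∂μ := by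
        refine integral_mono ((hf.add hf.comp_neg).smul _).norm ((hf.norm.add hneg).const_mul _)
          fun x => ?_
        rw [evenPart, norm_smul, Real.norm_of_nonneg (by norm_num)]
        gcongr
        exact norm_add_le _ _
    _ = ∫ x, ‖f x‖ ∂μ := by
        rw [integral_const_mul, integral_add hf.norm hneg,
          integral_neg_eq_self (fun x => ‖f x‖) μ]
        ring

end EvenPart

section Fourier

variable {V E : Type*} [NormedAddCommGroup V] [InnerProductSpace ℝ V] [FiniteDimensional ℝ V]
  [MeasurableSpace V] [BorelSpace V] [NormedAddCommGroup E] [NormedSpace ℂ E]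

theorem continuous_fourier {f : V → E} (hf : Integrable f) : Continuous (𝓕 f) :=
  VectorFourier.fourierIntegral_continuous Real.continuous_fourierChar
    (innerSL ℝ).continuous₂ hf

theorem norm_fourier_le (f : V → E) (w : V) : ‖𝓕 f w‖ ≤ ∫ v, ‖f v‖ :=
  VectorFourier.norm_fourierIntegral_le_integral_norm _ _ _ _ _

theorem fourier_comp_neg (f : V → E) (w : V) : 𝓕 (fun v => f (-v)) w = 𝓕 f (-w) := by
  rw [← Real.fourierInv_eq_fourier_comp_neg, Real.fourierInv_eq_fourier_neg]

theorem fourier_conj (f : V → ℂ) (w : V) : 𝓕 (fun v => conj (f v)) w = conj (𝓕 f (-w)) := by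
  simp only [Real.fourier_eq, ← integral_conj, Circle.smul_def, smul_eq_mul, map_mul,
    inner_neg_right, neg_neg, Circle.starRingEnd_addChar]

theorem integral_fourier_smul_eq [CompleteSpace E] {f : V → ℂ} {g : V → E} (hf : Integrable f)
    (hg : Integrable g) : ∫ w, 𝓕 f w • g w = ∫ v, f v • 𝓕 g v := by
  simpa only [flip_innerₗ] using! VectorFourier.integral_fourierIntegral_smul_eq_flip
    (L := innerₗ V) Real.continuous_fourierChar continuous_inner hf hg

theorem lipschitzWith_fourier {f : V → E} (hf : Integrable f)
    (hvf : Integrable fun v => ‖v‖ * ‖f v‖) :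
    LipschitzWith (2 * π * ∫ v, ‖v‖ * ‖f v‖).toNNReal (𝓕 f) := by
  refine lipschitzWith_of_nnnorm_fderiv_le (Real.differentiable_fourier hf hvf) fun w => ?_
  rw [← NNReal.coe_le_coe, coe_nnnorm, Real.fderiv_fourier hf hvf]
  have hnorm : ∀ v, ‖VectorFourier.fourierSMulRight (innerSL ℝ) f v‖ =
      2 * π * (‖v‖ * ‖f v‖) := fun v => by
    rw [VectorFourier.norm_fourierSMulRight, mul_assoc]
    exact congrArg (fun r => 2 * π * (r * ‖f v‖)) (innerSL_apply_norm ℝ v)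
  refine (norm_fourier_le _ w).trans (le_trans (le_of_eq ?_) (Real.le_coe_toNNReal _))
  simp only [hnorm, integral_const_mul]

theorem integrable_fourier_of_contDiff {f : V → E} (hf : ContDiff ℝ ∞ f)
    (hfc : HasCompactSupport f) : Integrable (𝓕 f) :=
  (𝓕 (hfc.toSchwartzMap hf)).integrable

theorem tendsto_integral_smul_fourier [CompleteSpace E] {f : ℕ → V → E} {g : V → E} {φ : V → ℂ}
    {M : ℝ} (hf : ∀ n, Integrable (f n)) (hg : Integrable g) (hφ : Integrable φ)
    (hφ' : Integrable (𝓕 φ)) (hM : ∀ n x, ‖f n x‖ ≤ M)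
    (hlim : ∀ x, Tendsto (fun n => f n x) atTop (𝓝 (g x))) :
    Tendsto (fun n => ∫ t, φ t • 𝓕 (f n) t) atTop (𝓝 (∫ t, φ t • 𝓕 g t)) := by
  rw [← integral_fourier_smul_eq hφ hg]
  simp only [← integral_fourier_smul_eq hφ (hf _)]
  refine tendsto_integral_of_dominated_convergence (fun x => ‖𝓕 φ x‖ * M)
    (fun n => hφ'.aestronglyMeasurable.smul (hf n).aestronglyMeasurable) (hφ'.norm.mul_const M)
    (fun n => .of_forall fun x => ?_) (.of_forall fun x => (hlim x).const_smul _)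
  rw [norm_smul]
  gcongr
  exact hM n x

end Fourier

section Bandlimited

variable {V E : Type*} [NormedAddCommGroup V] [InnerProductSpace ℝ V] [FiniteDimensional ℝ V]
  [MeasurableSpace V] [BorelSpace V] [NormedAddCommGroup E] [NormedSpace ℂ E]

/-- `F` is bandlimited to `K` if it is continuous, integrable, and its Fourier transform vanishes
off `K`. The class `ℰ` consists of the functions `ℝ → ℂ` bandlimited to `[-1, 1]`. For closed `K`,
requiring that the support or that its closure lie in `K` amounts to the same. -/
structure IsBandlimited (K : Set V) (F : V → E) : Prop where
  continuous : Continuous F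
  integrable : Integrable F
  support_fourier_subset : Function.support (𝓕 F) ⊆ K

namespace IsBandlimited

variable {K : Set V} {F G : V → E}

theorem fourier_eq_zero (hF : IsBandlimited K F) {t : V} (ht : t ∉ K) : 𝓕 F t = 0 :=
  Function.support_subset_iff'.1 hF.support_fourier_subset t ht

theorem const_smul (hF : IsBandlimited K F) (c : ℂ) : IsBandlimited K (c • F) where
  continuous := hF.continuous.const_smul c
  integrable := hF.integrable.smul c
  support_fourier_subset := Function.support_subset_iff'.2 fun t ht => by
    have h : 𝓕 (c • F) = c • 𝓕 F := VectorFourier.fourierIntegral_const_smul _ _ _ _ _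
    rw [h, Pi.smul_apply, hF.fourier_eq_zero ht, smul_zero]

theorem add (hF : IsBandlimited K F) (hG : IsBandlimited K G) : IsBandlimited K (F + G) where
  continuous := hF.continuous.add hG.continuous
  integrable := hF.integrable.add hG.integrable
  support_fourier_subset := Function.support_subset_iff'.2 fun t ht => by
    have h : 𝓕 (F + G) = 𝓕 F + 𝓕 G := VectorFourier.fourierIntegral_add
      Real.continuous_fourierChar (innerSL ℝ).continuous₂ hF.integrable hG.integrable
    rw [h, Pi.add_apply, hF.fourier_eq_zero ht, hG.fourier_eq_zero ht, add_zero]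

theorem comp_neg (hF : IsBandlimited K F) : IsBandlimited (-K) fun x => F (-x) where
  continuous := hF.continuous.comp continuous_neg
  integrable := hF.integrable.comp_neg
  support_fourier_subset := Function.support_subset_iff'.2 fun t ht => by
    rw [fourier_comp_neg, hF.fourier_eq_zero ht]

protected theorem star {F : V → ℂ} (hF : IsBandlimited K F) :
    IsBandlimited (-K) fun x => conj (F x) where
  continuous := Complex.continuous_conj.comp hF.continuous
  integrable := Complex.conjLIE.integrable_comp_iff.2 hF.integrable
  support_fourier_subset := Function.support_subset_iff'.2 fun t ht => by
    rw [fourier_conj, hF.fourier_eq_zero ht, map_zero]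

theorem ofReal_re {F : V → ℂ} (hF : IsBandlimited K F) (hK : -K = K) :
    IsBandlimited K fun x => ((F x).re : ℂ) := by
  have hstar : IsBandlimited K fun x => conj (F x) := hK ▸ hF.star
  convert! (hF.add hstar).const_smul 2⁻¹ using 1
  ext x
  simp only [Complex.re_eq_add_conj, Pi.smul_apply, Pi.add_apply, smul_eq_mul, div_eq_inv_mul]

protected theorem evenPart (hF : IsBandlimited K F) (hK : -K = K) :
    IsBandlimited K (evenPart F) := by
  have hneg : IsBandlimited K fun x => F (-x) := hK ▸ hF.comp_neg
  exact (hF.add hneg).const_smul ((2⁻¹ : ℝ) : ℂ)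

theorem exists_even_real {F : V → ℂ} (hF : IsBandlimited K F) (hK : -K = K) :
    ∃ G : V → ℂ, IsBandlimited K G ∧ (∀ x, (G x).im = 0) ∧ (∀ x, G (-x) = G x) ∧
      G 0 = (F 0).re ∧ ∫ x, ‖G x‖ ≤ ∫ x, ‖F x‖ := by
  have hE := hF.evenPart hK
  have hG := hE.ofReal_re hK
  refine ⟨_, hG, fun x => Complex.ofReal_im _, fun x => ?_, ?_, ?_⟩
  · rw [evenPart_neg]
  · rw [evenPart_zero]
  · refine (integral_mono hG.integrable.norm hE.integrable.norm fun x => ?_).trans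
      (integral_norm_evenPart_le hF.integrable)
    exact (Complex.norm_real _).trans_le (Complex.abs_re_le_norm (evenPart F x))

theorem integrable_mul_norm_fourier (hF : IsBandlimited K F) (hK : IsCompact K) {w : V → ℝ}
    (hw : Continuous w) : Integrable fun t => w t * ‖𝓕 F t‖ :=
  (hw.mul (continuous_fourier hF.integrable).norm).integrable_of_hasCompactSupport
    (HasCompactSupport.intro hK fun t ht => by
      rw [Pi.mul_apply, hF.fourier_eq_zero ht, norm_zero, mul_zero])

theorem integrable_fourier (hF : IsBandlimited K F) (hK : IsCompact K) : Integrable (𝓕 F) :=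
  (continuous_fourier hF.integrable).integrable_of_hasCompactSupport
    (HasCompactSupport.intro hK fun _ ht => hF.fourier_eq_zero ht)

theorem integral_mul_norm_fourier_le (hF : IsBandlimited K F) (hK : IsCompact K) {w : V → ℝ}
    (hw : Continuous w) (hw0 : ∀ t, 0 ≤ w t) :
    ∫ t, w t * ‖𝓕 F t‖ ≤ (∫ t in K, w t) * ∫ x, ‖F x‖ := by
  rw [← setIntegral_eq_integral_of_forall_compl_eq_zero (s := K) fun t ht => by
    rw [hF.fourier_eq_zero ht, norm_zero, mul_zero], ← integral_mul_const]
  refine setIntegral_mono (hF.integrable_mul_norm_fourier hK hw).integrableOn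
    ((hw.continuousOn.integrableOn_compact hK).mul_const _) fun t => ?_
  exact mul_le_mul_of_nonneg_left (norm_fourier_le F t) (hw0 t)

theorem eq_fourier_fourier_neg [CompleteSpace E] (hF : IsBandlimited K F) (hK : IsCompact K)
    (x : V) : F x = 𝓕 (𝓕 F) (-x) := by
  rw [← Real.fourierInv_eq_fourier_neg,
    hF.continuous.fourierInv_fourier_eq hF.integrable (hF.integrable_fourier hK)]

theorem norm_le [CompleteSpace E] (hF : IsBandlimited K F) (hK : IsCompact K) (x : V) :
    ‖F x‖ ≤ volume.real K * ∫ y, ‖F y‖ :=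
  calc ‖F x‖ = ‖𝓕 (𝓕 F) (-x)‖ := by rw [← hF.eq_fourier_fourier_neg hK]
    _ ≤ ∫ t, 1 * ‖𝓕 F t‖ := by simpa only [one_mul] using norm_fourier_le (𝓕 F) (-x)
    _ ≤ (∫ _ in K, (1 : ℝ)) * ∫ y, ‖F y‖ :=
      hF.integral_mul_norm_fourier_le hK continuous_const fun _ => zero_le_one
    _ = volume.real K * ∫ y, ‖F y‖ := by rw [setIntegral_const, smul_eq_mul, mul_one]

theorem lipschitzWith [CompleteSpace E] (hF : IsBandlimited K F) (hK : IsCompact K) {C : ℝ}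
    (hC : ∫ x, ‖F x‖ ≤ C) :
    LipschitzWith (2 * π * ((∫ t in K, ‖t‖) * C)).toNNReal F := by
  have hbound : ∫ t, ‖t‖ * ‖𝓕 F t‖ ≤ (∫ t in K, ‖t‖) * C :=
    (hF.integral_mul_norm_fourier_le hK continuous_norm norm_nonneg).trans <| by gcongr
  have hneg : LipschitzWith _ fun x => 𝓕 (𝓕 F) (-x) :=
    (lipschitzWith_fourier (hF.integrable_fourier hK)
      (hF.integrable_mul_norm_fourier hK continuous_norm)).comp LipschitzWith.id.neg
  rw [mul_one, ← funext (hF.eq_fourier_fourier_neg hK)] at hneg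
  exact hneg.weaken (Real.toNNReal_le_toNNReal (by gcongr))

theorem of_tendsto [CompleteSpace E] {f : ℕ → V → E} {g : V → E} {M : ℝ} (hK : IsClosed K)
    (hf : ∀ n, IsBandlimited K (f n)) (hM : ∀ n x, ‖f n x‖ ≤ M) (hgc : Continuous g)
    (hgi : Integrable g) (hlim : ∀ x, Tendsto (fun n => f n x) atTop (𝓝 (g x))) :
    IsBandlimited K g := by
  refine ⟨hgc, hgi, Function.support_subset_iff'.2 ?_⟩
  refine eqOn_zero_of_integral_contDiff_smul_eq_zero (μ := volume) hK.isOpen_compl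
    (continuous_fourier hgi).continuousOn fun φ hφ hφc hφK => ?_
  have hφd : ContDiff ℝ ∞ fun t => (φ t : ℂ) := Complex.ofRealCLM.contDiff.comp hφ
  have hφs : HasCompactSupport fun t => (φ t : ℂ) := hφc.comp_left Complex.ofReal_zero
  have hconv := tendsto_integral_smul_fourier (fun n => (hf n).integrable) hgi
    (hφd.continuous.integrable_of_hasCompactSupport hφs)
    (integrable_fourier_of_contDiff hφd hφs) hM hlim
  simp only [Complex.coe_smul] at hconv
  have hzero : ∀ n, ∫ t, φ t • 𝓕 (f n) t = 0 := fun n =>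
    integral_eq_zero_of_ae <| .of_forall fun t => by
      by_cases ht : t ∈ K
      · simp [image_eq_zero_of_notMem_tsupport fun h => hφK h ht]
      · simp [(hf n).fourier_eq_zero ht]
  simp only [hzero] at hconv
  exact tendsto_nhds_unique hconv tendsto_const_nhds

theorem exists_subseq_tendsto [ProperSpace E] {f : ℕ → V → E} {C : ℝ} (hK : IsCompact K)
    (hf : ∀ n, IsBandlimited K (f n)) (hC : ∀ n, ∫ x, ‖f n x‖ ≤ C) :
    ∃ (g : V → E) (φ : ℕ → ℕ), StrictMono φ ∧ IsBandlimited K g ∧ ∫ x, ‖g x‖ ≤ C ∧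
      ∀ x, Tendsto (fun n => f (φ n) x) atTop (𝓝 (g x)) := by
  have hM : ∀ n x, ‖f n x‖ ≤ volume.real K * C := fun n x =>
    ((hf n).norm_le hK x).trans (by gcongr; exact hC n)
  have hequi : Equicontinuous f :=
    (LipschitzWith.uniformEquicontinuous f _ fun n => (hf n).lipschitzWith hK (hC n)).equicontinuous
  obtain ⟨g, φ, hφ, hg⟩ := exists_subseq_tendsto_of_equicontinuous
    (f := fun n => ⟨f n, (hf n).continuous⟩) hequi fun x =>
      isBounded_iff_forall_norm_le.2 ⟨_, forall_mem_range.2 fun n => hM n x⟩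
  have hlim : ∀ x, Tendsto (fun n => f (φ n) x) atTop (𝓝 (g x)) := fun x =>
    ((ContinuousEvalConst.continuous_eval_const x).tendsto g).comp hg
  obtain ⟨hgi, hgC⟩ := integrable_and_integral_norm_le_of_tendsto_ae
    (fun n => (hf (φ n)).integrable) (fun n => hC (φ n)) (.of_forall hlim)
  exact ⟨g, φ, hφ, of_tendsto hK.isClosed (fun n => hf (φ n)) (fun n => hM (φ n)) g.continuous hgi
    hlim, hgC, hlim⟩

end IsBandlimited

theorem isBandlimited_fourierInv [CompleteSpace E] {K : Set V} {h : V → E} (hh : ContDiff ℝ ∞ h)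
    (hc : HasCompactSupport h) (hK : Function.support h ⊆ K) : IsBandlimited K (𝓕⁻ h) where
  continuous := by
    rw [Real.fourierInv_eq_fourier_comp_neg]
    exact continuous_fourier (hh.continuous.integrable_of_hasCompactSupport hc).comp_neg
  integrable := by
    simpa only [← Real.fourierInv_eq_fourier_neg] using
      (integrable_fourier_of_contDiff hh hc).comp_neg
  support_fourier_subset := by
    rwa [hh.continuous.fourier_fourierInv_eq (hh.continuous.integrable_of_hasCompactSupport hc)
      (integrable_fourier_of_contDiff hh hc)]

theorem exists_isBandlimited_apply_zero_ne_zero {K : Set V} (hK : (interior K).Nonempty) :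
    ∃ F : V → ℂ, IsBandlimited K F ∧ F 0 ≠ 0 := by
  obtain ⟨c, hc⟩ := hK
  obtain ⟨r, hr, hrK⟩ := Metric.mem_nhds_iff.1 (mem_interior_iff_mem_nhds.1 hc)
  let b : ContDiffBump c := ⟨r / 2, r, half_pos hr, half_lt_self hr⟩
  refine ⟨𝓕⁻ fun t => (b t : ℂ), isBandlimited_fourierInv
    (Complex.ofRealCLM.contDiff.comp b.contDiff)
    (b.hasCompactSupport.comp_left Complex.ofReal_zero) ?_, ?_⟩
  · refine (Function.support_comp_subset Complex.ofReal_zero b).trans ?_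
    rwa [b.support_eq]
  · have hint : 𝓕⁻ (fun t => (b t : ℂ)) 0 = ((∫ t, b t : ℝ) : ℂ) := by
      simp only [Real.fourierInv_eq, inner_zero_right, AddChar.map_zero_eq_one, one_smul,
        integral_complex_ofReal]
    rw [hint]
    exact Complex.ofReal_ne_zero.2 b.integral_pos.ne'

section EvalZeroConst

/-- The quotients `|F(0)| / ‖F‖₁` over the nonzero complex-valued functions `F` bandlimited
to `K`. -/
def evalZeroQuotients (K : Set V) : Set ℝ :=
  {r | ∃ F : V → ℂ, IsBandlimited K F ∧ F ≠ 0 ∧ r = ‖F 0‖ / ∫ x, ‖F x‖}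

/-- The `L¹` operator norm of `F ↦ F 0` on the complex-valued functions bandlimited to `K`;
this is `𝒞(∞)` when `K = [-1, 1]`. -/
noncomputable def evalZeroConst (K : Set V) : ℝ :=
  sSup (evalZeroQuotients K)

variable {K : Set V}

theorem nonempty_evalZeroQuotients (hK : (interior K).Nonempty) :
    (evalZeroQuotients K).Nonempty := by
  obtain ⟨F, hF, hF0⟩ := exists_isBandlimited_apply_zero_ne_zero hK
  exact ⟨_, F, hF, fun h => hF0 (congrFun h 0), rfl⟩

theorem bddAbove_evalZeroQuotients (hK : IsCompact K) : BddAbove (evalZeroQuotients K) := by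
  refine ⟨volume.real K, ?_⟩
  rintro _ ⟨F, hF, -, rfl⟩
  exact div_le_of_le_mul₀ (integral_nonneg fun _ => norm_nonneg _) measureReal_nonneg
    (hF.norm_le hK 0)

theorem IsBandlimited.norm_apply_zero_le {F : V → ℂ} (hF : IsBandlimited K F)
    (hK : IsCompact K) : ‖F 0‖ ≤ evalZeroConst K * ∫ x, ‖F x‖ := by
  have hnonneg : 0 ≤ ∫ x, ‖F x‖ := integral_nonneg fun _ => norm_nonneg _
  rcases hnonneg.eq_or_lt' with h0 | hpos
  · simpa only [h0, mul_zero] using hF.norm_le hK 0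
  · have hF0 : F ≠ 0 := by
      rintro rfl
      simp at hpos
    exact (div_le_iff₀ hpos).1 (le_csSup (bddAbove_evalZeroQuotients hK) ⟨F, hF, hF0, rfl⟩)

theorem evalZeroConst_pos (hK : IsCompact K) (hKi : (interior K).Nonempty) :
    0 < evalZeroConst K := by
  obtain ⟨F, hF, hF0⟩ := exists_isBandlimited_apply_zero_ne_zero hKi
  exact pos_of_mul_pos_left ((norm_pos_iff.2 hF0).trans_le (hF.norm_apply_zero_le hK))
    (integral_nonneg fun _ => norm_nonneg _)

theorem exists_seq_isBandlimited_tendsto_evalZeroConst (hK : IsCompact K)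
    (hKi : (interior K).Nonempty) :
    ∃ H : ℕ → V → ℂ, (∀ n, IsBandlimited K (H n)) ∧ (∀ n, ∫ x, ‖H n x‖ ≤ 1) ∧
      Tendsto (fun n => ‖H n 0‖) atTop (𝓝 (evalZeroConst K)) := by
  obtain ⟨r, -, hr, hmem⟩ :=
    exists_seq_tendsto_sSup (nonempty_evalZeroQuotients hKi) (bddAbove_evalZeroQuotients hK)
  choose F hF _ hrF using hmem
  have hnorm : ∀ n x, ‖(((∫ y, ‖F n y‖ : ℝ) : ℂ)⁻¹ • F n) x‖ = (∫ y, ‖F n y‖)⁻¹ * ‖F n x‖ :=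
    fun n x => by
      rw [Pi.smul_apply, norm_smul, norm_inv, Complex.norm_real,
        Real.norm_of_nonneg (integral_nonneg fun _ => norm_nonneg _)]
  refine ⟨fun n => ((∫ y, ‖F n y‖ : ℝ) : ℂ)⁻¹ • F n, fun n => (hF n).const_smul _, fun n => ?_, ?_⟩
  · simp only [hnorm, integral_const_mul]
    exact inv_mul_le_one
  · exact hr.congr fun n => by rw [hrF, hnorm, div_eq_inv_mul]

theorem exists_isBandlimited_norm_apply_zero_eq (hK : IsCompact K)
    (hKi : (interior K).Nonempty) :
    ∃ F : V → ℂ, IsBandlimited K F ∧ ∫ x, ‖F x‖ ≤ 1 ∧ ‖F 0‖ = evalZeroConst K := by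
  obtain ⟨H, hH, hH1, hlim⟩ := exists_seq_isBandlimited_tendsto_evalZeroConst hK hKi
  obtain ⟨F, φ, hφ, hF, hF1, hHF⟩ := IsBandlimited.exists_subseq_tendsto hK hH hH1
  exact ⟨F, hF, hF1, tendsto_nhds_unique (hHF 0).norm (hlim.comp hφ.tendsto_atTop)⟩

theorem exists_extremizer_CcalInf_general (hK : IsCompact K) (hKi : (interior K).Nonempty)
    (hKneg : -K = K) :
    ∃ G : V → ℂ, IsBandlimited K G ∧ (∀ x, (G x).im = 0) ∧ (∀ x, G (-x) = G x) ∧ G 0 = 1 ∧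
      ‖G 0‖ / ∫ x, ‖G x‖ = evalZeroConst K := by
  obtain ⟨F, hF, hF1, hF0⟩ := exists_isBandlimited_norm_apply_zero_eq hK hKi
  have hpos : 0 < evalZeroConst K := evalZeroConst_pos hK hKi
  have hne : F 0 ≠ 0 := norm_pos_iff.1 (hF0 ▸ hpos)
  obtain ⟨G, hG, him, heven, hG0, hGF⟩ := (hF.const_smul (F 0)⁻¹).exists_even_real hKneg
  rw [Pi.smul_apply, smul_eq_mul, inv_mul_cancel₀ hne, Complex.one_re, Complex.ofReal_one] at hG0
  have hle : evalZeroConst K * ∫ x, ‖G x‖ ≤ 1 :=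
    calc evalZeroConst K * ∫ x, ‖G x‖
        ≤ evalZeroConst K * ∫ x, ‖((F 0)⁻¹ • F) x‖ := by gcongr
      _ = ∫ x, ‖F x‖ := by
        simp only [Pi.smul_apply, norm_smul, norm_inv, hF0, integral_const_mul,
          mul_inv_cancel_left₀ hpos.ne']
      _ ≤ 1 := hF1
  have hge : 1 ≤ evalZeroConst K * ∫ x, ‖G x‖ := by
    simpa only [hG0, norm_one] using hG.norm_apply_zero_le hK
  refine ⟨G, hG, him, heven, hG0, ?_⟩
  rw [hG0, norm_one, one_div]
  exact inv_eq_of_mul_eq_one_left (hle.antisymm hge)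

end EvalZeroConst

end Bandlimited

theorem CcalInf_eq_evalZeroConst : CcalInf = evalZeroConst (Icc (-1 : ℝ) 1) := by
  unfold CcalInf evalZeroConst evalZeroQuotients
  congr 1 with r
  exact ⟨fun ⟨F, hc, hi, hne, hs, hr⟩ => ⟨F, ⟨hc, hi, hs⟩, hne, hr⟩,
    fun ⟨F, hF, hne, hr⟩ =>
      ⟨F, hF.continuous, hF.integrable, hne, hF.support_fourier_subset, hr⟩⟩

/-- Existence of an even, real-valued extremizer G with G(0) = 1 for 𝒞(∞). -/
theorem exists_extremizer_CcalInf :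
    ∃ G : ℝ → ℂ, Continuous G ∧ Integrable G ∧ (∀ x, (G x).im = 0) ∧
      (∀ x, G (-x) = G x) ∧ Function.support (𝓕 G) ⊆ Set.Icc (-1 : ℝ) 1 ∧
      G 0 = 1 ∧ ‖G 0‖ / (∫ x : ℝ, ‖G x‖) = CcalInf := by
  obtain ⟨G, hG, him, heven, hG0, hmax⟩ := exists_extremizer_CcalInf_general
    (isCompact_Icc (a := (-1 : ℝ)) (b := 1)) (by simp) (by simp)
  exact ⟨G, hG.continuous, hG.integrable, him, heven, hG.support_fourier_subset, hG0,
    hmax.trans CcalInf_eq_evalZeroConst.symm⟩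
end

section
/- Extremizers of the problem defining 𝒞(∞) are unique up to multiplication by a nonzero complex scalar: if F₁, F₂ ∈ ℰ are nonzero functions with |F₁(0)|/‖F₁‖₁ = |F₂(0)|/‖F₂‖₁ = 𝒞(∞), then F₂ = c·F₁ for some nonzero complex number c. -/
open MeasureTheory Filter
open scoped FourierTransform Real

/-!
The `L¹` norm is convex, so two extremizers `F`, `G` with `F 0 = G 0 = 1` satisfy
`‖F + G‖ = ‖F‖ + ‖G‖` pointwise. Comparing `F` with `conj F` shows that `F` is real on `ℝ`, and then
`F G ≥ 0`. Such an `F` extends to an entire function `f` whose Fourier-Laplace density is supported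
in `[-δ, δ]`, and zeros of `f` may be moved around within this class. If `f` had a pair of zeros
`w`, `conj w`, or a double real zero, moving both to the origin would give an admissible
perturbation of `F` that is a nonnegative multiple of `F` and vanishes at `0`; subtracting a little
of it would decrease the norm. Hence all zeros of `f` are real and simple. As `f g ≥ 0` on `ℝ`, the
extensions `f` and `g` have the same zeros, and `q = g / f` is entire. At a point where `q = -r ≤ 0`
the extremizer `(r f + g) / (r + 1)` would have a double zero. So `q` omits `(-∞, 0]` and is
constant.
-/

open Complex Set Topology
open scoped ComplexConjugate

section IntegralNorm

variable {X E : Type*} [MeasurableSpace X] {μ : Measure X} [NormedAddCommGroup E] [NormedSpace ℝ E]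

lemma convexOn_integral_norm {S : Set (X → E)} (hS : Convex ℝ S)
    (hi : ∀ F ∈ S, Integrable F μ) : ConvexOn ℝ S fun F => ∫ x, ‖F x‖ ∂μ := by
  refine ⟨hS, fun F hF G hG a b ha hb hab => ?_⟩
  have hFi := ((hi F hF).norm.const_mul a)
  have hGi := ((hi G hG).norm.const_mul b)
  calc ∫ x, ‖(a • F + b • G) x‖ ∂μ
      ≤ ∫ x, (a * ‖F x‖ + b * ‖G x‖) ∂μ :=
        integral_mono (hi _ (hS hF hG ha hb hab)).norm (hFi.add hGi) fun x =>
          (norm_add_le _ _).trans_eq (by simp [norm_smul, abs_of_nonneg, ha, hb])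
    _ = a • ∫ x, ‖F x‖ ∂μ + b • ∫ x, ‖G x‖ ∂μ := by
        rw [integral_add hFi hGi, integral_const_mul, integral_const_mul, smul_eq_mul, smul_eq_mul]

lemma norm_add_eq_of_isMinOn_integral_norm [TopologicalSpace X] [OpensMeasurableSpace X]
    [μ.IsOpenPosMeasure] {S : Set (X → E)} (hS : Convex ℝ S)
    (hc : ∀ F ∈ S, Continuous F) (hi : ∀ F ∈ S, Integrable F μ) {F G : X → E}
    (hF : F ∈ S) (hG : G ∈ S) (hFmin : IsMinOn (fun F => ∫ x, ‖F x‖ ∂μ) S F)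
    (hGmin : IsMinOn (fun F => ∫ x, ‖F x‖ ∂μ) S G) (x : X) :
    ‖F x + G x‖ = ‖F x‖ + ‖G x‖ := by
  have hFi := hi F hF
  have hGi := hi G hG
  have hFG : ∫ x, ‖F x‖ ∂μ = ∫ x, ‖G x‖ ∂μ := le_antisymm (hFmin hG) (hGmin hF)
  have hsum : ∫ x, (‖F x‖ + ‖G x‖) ∂μ = 2 * ∫ x, ‖F x‖ ∂μ := by
    rw [integral_add hFi.norm hGi.norm, two_mul, hFG]
  have hmid : ∫ x, ‖F x‖ ∂μ ≤ 2⁻¹ * ∫ x, ‖F x + G x‖ ∂μ := by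
    rw [← integral_const_mul]
    refine (hFmin (hS hF hG (inv_nonneg.2 zero_le_two) (inv_nonneg.2 zero_le_two)
      (by norm_num))).trans_eq (integral_congr_ae (.of_forall fun x => ?_))
    simp [← smul_add, norm_smul]
  have hle : (fun x => ‖F x + G x‖) ≤ᵐ[μ] fun x => ‖F x‖ + ‖G x‖ :=
    .of_forall fun x => norm_add_le _ _
  have hge : ∫ x, (‖F x‖ + ‖G x‖) ∂μ ≤ ∫ x, ‖F x + G x‖ ∂μ := by linarith
  have heq := (integral_eq_iff_of_ae_le (hFi.add hGi).norm (hFi.norm.add hGi.norm) hle).1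
    (le_antisymm (integral_mono_ae (hFi.add hGi).norm (hFi.norm.add hGi.norm) hle) hge)
  have hFc := hc F hF
  have hGc := hc G hG
  exact congrFun (((hFc.add hGc).norm.ae_eq_iff_eq μ (hFc.norm.add hGc.norm)).1 heq) x

/-- The right derivative of `ε ↦ ∫ ‖F - ε • G‖` at `0` is `-∫ ‖G‖`. -/
lemma ae_eq_zero_of_integral_norm_le_integral_norm_sub_smul {F G : X → E} (hF : Integrable F μ)
    (hG : Integrable G μ) (hGF : ∀ᵐ x ∂μ, ∃ h : ℝ, 0 ≤ h ∧ G x = h • F x)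
    (hmin : ∀ ε : ℝ, 0 < ε → ∫ x, ‖F x‖ ∂μ ≤ ∫ x, ‖F x - ε • G x‖ ∂μ) : G =ᵐ[μ] 0 := by
  have hFG (ε : ℝ) : Integrable (fun x => ‖F x - ε • G x‖) μ := (hF.sub (hG.smul ε)).norm
  have hlim : Tendsto (fun ε : ℝ => ∫ x, ε⁻¹ * (‖F x‖ - ‖F x - ε • G x‖) ∂μ) (𝓝[>] 0)
      (𝓝 (∫ x, ‖G x‖ ∂μ)) := by
    refine tendsto_integral_filter_of_dominated_convergence (fun x => ‖G x‖)
      (.of_forall fun ε => ((hF.norm.sub (hFG ε)).const_mul _).aestronglyMeasurable) ?_ hG.norm ?_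
    · filter_upwards [self_mem_nhdsWithin] with ε (hε : 0 < ε)
      refine .of_forall fun x => ?_
      rw [norm_mul, norm_inv, Real.norm_of_nonneg hε.le, inv_mul_le_iff₀ hε]
      simpa [norm_smul, abs_of_pos hε] using abs_norm_sub_norm_le (F x) (F x - ε • G x)
    · filter_upwards [hGF] with x ⟨h, hh, hx⟩
      refine tendsto_const_nhds.congr' ?_
      have hsmall : ∀ᶠ ε : ℝ in 𝓝[>] 0, ε * h < 1 :=
        (((continuous_mul_const h).tendsto' 0 0 (zero_mul h)).eventually_lt_const
          one_pos).filter_mono nhdsWithin_le_nhds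
      filter_upwards [self_mem_nhdsWithin, hsmall] with ε (hε : 0 < ε) hεh
      have hfactor : F x - ε • G x = (1 - ε * h) • F x := by
        rw [hx, sub_smul, one_smul, mul_smul]
      rw [hfactor, hx, norm_smul, norm_smul, Real.norm_of_nonneg hh,
        Real.norm_of_nonneg (sub_nonneg.2 hεh.le)]
      field_simp
      ring
  have hle : ∫ x, ‖G x‖ ∂μ ≤ 0 := by
    refine le_of_tendsto hlim ?_
    filter_upwards [self_mem_nhdsWithin] with ε (hε : 0 < ε)
    rw [integral_const_mul, integral_sub hF.norm (hFG ε)]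
    exact mul_nonpos_of_nonneg_of_nonpos (inv_nonneg.2 hε.le) (sub_nonpos.2 (hmin ε hε))
  have hzero := (integral_eq_zero_iff_of_nonneg (fun _ => norm_nonneg _) hG.norm).1
    (le_antisymm hle (integral_nonneg fun _ => norm_nonneg _))
  exact hzero.mono fun x hx => norm_eq_zero.1 hx

end IntegralNorm

section Entire

variable {f g : ℂ → ℂ}

lemma eq_of_forall_ofReal_eq (hf : Differentiable ℂ f) (hg : Differentiable ℂ g)
    (h : ∀ x : ℝ, f x = g x) : f = g := by
  have hreal : Tendsto ((↑) : ℝ → ℂ) (𝓝[≠] 0) (𝓝[≠] 0) :=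
    (continuous_ofReal.tendsto' 0 0 ofReal_zero).inf (tendsto_principal_principal.2 (by simp))
  exact (analyticOnNhd_univ_iff_differentiable.2 hf).eq_of_frequently_eq
    (analyticOnNhd_univ_iff_differentiable.2 hg) (hreal.frequently (.of_forall h))

lemma conj_apply_of_forall_ofReal_im_eq_zero (hf : Differentiable ℂ f)
    (h : ∀ x : ℝ, (f x).im = 0) (z : ℂ) : f (conj z) = conj (f z) := by
  have heq : conj ∘ f ∘ conj = f :=
    eq_of_forall_ofReal_eq (fun z => differentiableAt_conj_conj_iff.2 (hf (conj z))) hf fun x => by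
      simpa using conj_eq_iff_im.2 (h x)
  simpa using congrArg conj (congrFun heq z)

lemma differentiable_dslope (hf : Differentiable ℂ f) (w : ℂ) : Differentiable ℂ (dslope f w) :=
  differentiableOn_univ.1 ((differentiableOn_dslope univ_mem).2 hf.differentiableOn)

lemma eq_sub_mul_dslope {w : ℂ} (hw : f w = 0) (z : ℂ) : f z = (z - w) * dslope f w z := by
  simpa [hw] using (sub_smul_dslope f w z).symm

lemma exists_differentiable_eq_mul (hf : Differentiable ℂ f) (hg : Differentiable ℂ g)
    (hfg : ∀ w, f w = 0 → g w = 0) (hsimple : ∀ w, f w = 0 → deriv f w ≠ 0) :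
    ∃ q : ℂ → ℂ, Differentiable ℂ q ∧ ∀ z, g z = q z * f z := by
  classical
  refine ⟨fun z => if f z = 0 then deriv g z / deriv f z else g z / f z, fun w => ?_, fun z => ?_⟩
  · by_cases hw : f w = 0
    · have hne : dslope f w w ≠ 0 := by simpa using hsimple w hw
      refine ((differentiable_dslope hg w w).div (differentiable_dslope hf w w)
        hne).congr_of_eventuallyEq ?_
      filter_upwards [(differentiable_dslope hf w).continuous.continuousAt.eventually_ne hne]
        with z hz
      rcases eq_or_ne z w with rfl | hzw
      · simp [hw]
      · have hsub : z - w ≠ 0 := sub_ne_zero.2 hzw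
        simp [eq_sub_mul_dslope hw z, eq_sub_mul_dslope (hfg w hw) z, hz, hsub,
          mul_div_mul_left]
    · refine ((hg w).div (hf w) hw).congr_of_eventuallyEq ?_
      filter_upwards [hf.continuous.continuousAt.eventually_ne hw] with z hz
      simp [hz]
  · by_cases hz : f z = 0
    · simp [hz, hfg z hz]
    · simp [hz]

lemma apply_eq_apply_of_forall_le_im {C : ℝ} (hf : Differentiable ℂ f)
    (hC : ∀ z, C ≤ (f z).im) (z w : ℂ) : f z = f w := by
  set s : ℂ → ℂ := fun z => f z - (C - 1) * I with hs
  have hone (z : ℂ) : 1 ≤ ‖s z‖ := by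
    refine le_trans ?_ (im_le_norm _)
    simpa [hs] using by linarith [hC z]
  have hne (z : ℂ) : s z ≠ 0 := norm_pos_iff.1 (one_pos.trans_le (hone z))
  have hbdd : Bornology.IsBounded (range fun z => (s z)⁻¹) := by
    refine isBounded_iff_forall_norm_le.2 ⟨1, ?_⟩
    rintro _ ⟨z, rfl⟩
    rw [norm_inv]
    exact inv_le_one_of_one_le₀ (hone z)
  have hconst := ((hf.sub_const _).inv hne).apply_eq_apply_of_bounded hbdd z w
  exact sub_left_injective (inv_injective hconst)

lemma apply_eq_apply_of_forall_mem_slitPlane (hf : Differentiable ℂ f)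
    (hslit : ∀ z, f z ∈ slitPlane) (z w : ℂ) : f z = f w := by
  have hlog : log (f z) = log (f w) :=
    apply_eq_apply_of_forall_le_im (f := fun z => log (f z)) (fun z => (hf z).clog (hslit z))
      (fun z => (neg_pi_lt_log_im (f z)).le) z w
  rw [← exp_log (slitPlane_ne_zero (hslit z)), hlog, exp_log (slitPlane_ne_zero (hslit w))]

end Entire

section FourierLaplace

/-- The inverse Fourier integral of `φ` at a complex point; for a compactly supported `φ` it
extends `𝓕⁻ φ` to an entire function. -/
noncomputable def fourierLaplace (φ : ℝ → ℂ) (z : ℂ) : ℂ :=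
  ∫ t, φ t * cexp (2 * π * I * z * t)

lemma fourierLaplace_ofReal (φ : ℝ → ℂ) (x : ℝ) : fourierLaplace φ x = 𝓕⁻ φ x := by
  rw [Real.fourierInv_eq', fourierLaplace]
  refine integral_congr_ae (.of_forall fun t => ?_)
  simp only [RCLike.inner_apply, conj_trivial, smul_eq_mul, mul_comm (φ t)]
  push_cast
  ring_nf

lemma hasDerivAt_exp_two_pi_I_mul (t : ℝ) (z : ℂ) :
    HasDerivAt (fun z : ℂ => cexp (2 * π * I * z * t))
      (cexp (2 * π * I * z * t) * (2 * π * I * t)) z := by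
  simpa using (((hasDerivAt_id z).const_mul (2 * π * I)).mul_const (t : ℂ)).cexp

variable {φ : ℝ → ℂ}

lemma integrable_mul_exp_two_pi_I_mul (hc : Continuous φ) (hs : HasCompactSupport φ) (z : ℂ) :
    Integrable fun t : ℝ => φ t * cexp (2 * π * I * z * t) :=
  Continuous.integrable_of_hasCompactSupport (by fun_prop) hs.mul_right

lemma differentiable_fourierLaplace (hc : Continuous φ) (hs : HasCompactSupport φ) :
    Differentiable ℂ (fourierLaplace φ) := by
  intro z₀
  have hcont : Continuous fun p : ℂ × ℝ => cexp (2 * π * I * p.1 * p.2) * (2 * π * I * p.2) := by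
    fun_prop
  obtain ⟨B, hB⟩ := ((isCompact_closedBall z₀ 1).prod hs).exists_bound_of_continuousOn
    hcont.continuousOn
  refine (hasDerivAt_integral_of_dominated_loc_of_deriv_le (bound := fun t => ‖φ t‖ * B)
    (F' := fun z t => φ t * (cexp (2 * π * I * z * t) * (2 * π * I * t)))
    (Metric.closedBall_mem_nhds z₀ one_pos)
    (.of_forall fun z => (integrable_mul_exp_two_pi_I_mul hc hs z).aestronglyMeasurable)
    (integrable_mul_exp_two_pi_I_mul hc hs z₀) (Continuous.aestronglyMeasurable (by fun_prop))
    (.of_forall fun t z hz => ?_) ((hc.integrable_of_hasCompactSupport hs).norm.mul_const B)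
    (.of_forall fun t z _ => (hasDerivAt_exp_two_pi_I_mul t z).const_mul (φ t))).2.differentiableAt
  by_cases ht : t ∈ tsupport φ
  · rw [norm_mul]
    gcongr
    exact hB (z, t) ⟨hz, ht⟩
  · simp [image_eq_zero_of_notMem_tsupport ht]

lemma exists_primitive_support_subset_Icc {E : Type*} [NormedAddCommGroup E] [NormedSpace ℝ E]
    [CompleteSpace E] {k : ℝ → E} {a b : ℝ} (hk : Continuous k) (hs : Function.support k ⊆ Icc a b)
    (hint : ∫ t, k t = 0) :
    ∃ K : ℝ → E, (∀ t, HasDerivAt K (k t) t) ∧ Function.support K ⊆ Icc a b := by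
  have hki : Integrable k :=
    hk.integrable_of_hasCompactSupport (.of_support_subset_isCompact isCompact_Icc hs)
  have hk0 {t : ℝ} (ht : t ∉ Icc a b) : k t = 0 := Function.notMem_support.1 fun h => ht (hs h)
  refine ⟨fun t => ∫ s in Iic t, k s, fun t => ?_, fun t ht => ⟨?_, ?_⟩⟩
  · have hsplit (u : ℝ) : ∫ s in Iic u, k s = (∫ s in Iic 0, k s) + ∫ s in 0..u, k s :=
      eq_add_of_sub_eq' (intervalIntegral.integral_Iic_sub_Iic hki.integrableOn hki.integrableOn)
    exact ((hk.integral_hasStrictDerivAt 0 t).hasDerivAt.const_add _).congr_of_eventuallyEq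
      (.of_forall hsplit)
  · by_contra! hta
    exact ht (setIntegral_eq_zero_of_forall_eq_zero fun s hs' =>
      hk0 fun h => (h.1.trans hs').not_gt hta)
  · by_contra! hbt
    refine ht ((setIntegral_eq_integral_of_forall_compl_eq_zero fun s hs' => hk0 fun h => ?_).trans
      hint)
    exact hs' (h.2.trans hbt.le)

/-- The vanishing at `w` makes the primitive of `t ↦ φ t * exp (2πiwt)` compactly supported, so that
integration by parts has no boundary terms. -/
lemma exists_fourierLaplace_eq_sub_mul {a b : ℝ} (hc : Continuous φ)
    (hs : Function.support φ ⊆ Icc a b) {w : ℂ} (hw : fourierLaplace φ w = 0) :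
    ∃ ψ : ℝ → ℂ, Continuous ψ ∧ Function.support ψ ⊆ Icc a b ∧
      ∀ z, fourierLaplace φ z = (z - w) * fourierLaplace ψ z := by
  obtain ⟨K, hK, hKs⟩ := exists_primitive_support_subset_Icc (by fun_prop)
    ((Function.support_mul_subset_left _ _).trans hs) hw
  have hKc : Continuous K := continuous_iff_continuousAt.2 fun t => (hK t).continuousAt
  have hKcs : HasCompactSupport K := .of_support_subset_isCompact isCompact_Icc hKs
  have hφcs : HasCompactSupport φ := .of_support_subset_isCompact isCompact_Icc hs
  refine ⟨fun t => -(2 * π * I) * K t * cexp (-(2 * π * I * w * t)), by fun_prop, ?_, fun z => ?_⟩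
  · exact (Function.support_mul_subset_left _ _).trans
      ((Function.support_mul_subset_right _ _).trans hKs)
  have hexp (t : ℝ) : HasDerivAt (fun t : ℝ => cexp (2 * π * I * (z - w) * t))
      (cexp (2 * π * I * (z - w) * t) * (2 * π * I * (z - w))) t := by
    simpa using ((hasDerivAt_id (t : ℂ)).const_mul (2 * π * I * (z - w))).cexp.comp_ofReal
  have hparts := integral_mul_deriv_eq_deriv_mul_of_integrable (u := K)
    (v := fun t : ℝ => cexp (2 * π * I * (z - w) * t)) (fun t _ => hK t) (fun t _ => hexp t)
    (Continuous.integrable_of_hasCompactSupport (by fun_prop) hKcs.mul_right)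
    (Continuous.integrable_of_hasCompactSupport (by fun_prop) hφcs.mul_right.mul_right)
    (Continuous.integrable_of_hasCompactSupport (by fun_prop) hKcs.mul_right)
  calc fourierLaplace φ z
      = ∫ t, φ t * cexp (2 * π * I * w * t) * cexp (2 * π * I * (z - w) * t) := by
        refine integral_congr_ae (.of_forall fun t => ?_)
        simp only [mul_assoc (φ t), ← Complex.exp_add]
        ring_nf
    _ = -∫ t, K t * (cexp (2 * π * I * (z - w) * t) * (2 * π * I * (z - w))) := by
        rw [hparts, neg_neg]
    _ = ∫ t, (z - w) * (-(2 * π * I) * K t * cexp (-(2 * π * I * w * t)) *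
          cexp (2 * π * I * z * t)) := by
        rw [← integral_neg]
        refine integral_congr_ae (.of_forall fun t => ?_)
        have hsplit : cexp (2 * π * I * (z - w) * t)
            = cexp (-(2 * π * I * w * t)) * cexp (2 * π * I * z * t) := by
          rw [← Complex.exp_add]
          ring_nf
        simp only [hsplit]
        ring
    _ = (z - w) * fourierLaplace _ z := integral_const_mul _ _

end FourierLaplace

/-- The Paley-Wiener entire functions: Fourier-Laplace transforms of continuous densities
supported in `[-δ, δ]`. -/
def IsPaleyWiener (δ : ℝ) (f : ℂ → ℂ) : Prop :=
  ∃ φ : ℝ → ℂ, Continuous φ ∧ Function.support φ ⊆ Icc (-δ) δ ∧ fourierLaplace φ = f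

namespace IsPaleyWiener

variable {δ : ℝ} {f g : ℂ → ℂ}

lemma differentiable (hf : IsPaleyWiener δ f) : Differentiable ℂ f := by
  obtain ⟨φ, hφ, hs, rfl⟩ := hf
  exact differentiable_fourierLaplace hφ (.of_support_subset_isCompact isCompact_Icc hs)

lemma add (hf : IsPaleyWiener δ f) (hg : IsPaleyWiener δ g) :
    IsPaleyWiener δ fun z => f z + g z := by
  obtain ⟨φ, hφ, hφs, rfl⟩ := hf
  obtain ⟨ψ, hψ, hψs, rfl⟩ := hg
  refine ⟨φ + ψ, hφ.add hψ, (Function.support_add _ _).trans (union_subset hφs hψs), ?_⟩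
  ext z
  simp only [fourierLaplace, Pi.add_apply, add_mul]
  exact integral_add
    (integrable_mul_exp_two_pi_I_mul hφ (.of_support_subset_isCompact isCompact_Icc hφs) z)
    (integrable_mul_exp_two_pi_I_mul hψ (.of_support_subset_isCompact isCompact_Icc hψs) z)

lemma const_mul (hf : IsPaleyWiener δ f) (c : ℂ) : IsPaleyWiener δ fun z => c * f z := by
  obtain ⟨φ, hφ, hs, rfl⟩ := hf
  refine ⟨fun t => c * φ t, by fun_prop, (Function.support_mul_subset_right _ _).trans hs, ?_⟩
  ext z
  simp only [fourierLaplace, mul_assoc]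
  exact integral_const_mul _ _

lemma of_sub_mul {w : ℂ} (hg : Continuous g) (hf : IsPaleyWiener δ fun z => (z - w) * g z) :
    IsPaleyWiener δ g := by
  obtain ⟨φ, hφ, hs, hφf⟩ := hf
  obtain ⟨ψ, hψ, hψs, hdiv⟩ := exists_fourierLaplace_eq_sub_mul (w := w) hφ hs (by simp [hφf])
  have hψd := differentiable_fourierLaplace hψ (.of_support_subset_isCompact isCompact_Icc hψs)
  refine ⟨ψ, hψ, hψs, hψd.continuous.ext_on (dense_compl_singleton w) hg fun z hz => ?_⟩
  refine mul_left_cancel₀ (sub_ne_zero.2 hz) ?_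
  rw [← hdiv, hφf]

lemma move_zero {w : ℂ} (hg : Continuous g) (hf : IsPaleyWiener δ fun z => (z - w) * g z) (v : ℂ) :
    IsPaleyWiener δ fun z => (z - v) * g z := by
  have heq : (fun z => (z - v) * g z) = fun z => (z - w) * g z + (w - v) * g z := by
    ext z
    ring
  exact heq ▸ hf.add ((hf.of_sub_mul hg).const_mul (w - v))

lemma sq_mul_of_sub_mul_sub_mul {w v : ℂ} (hg : Continuous g)
    (hf : IsPaleyWiener δ fun z => (z - w) * ((z - v) * g z)) :
    IsPaleyWiener δ fun z => z ^ 2 * g z := by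
  have hw : IsPaleyWiener δ fun z => (z - v) * (z * g z) := by
    convert hf.move_zero (by fun_prop) 0 using 2
    ring
  convert hw.move_zero (by fun_prop) 0 using 2
  ring

end IsPaleyWiener

section Bandlimited

/-- Continuous integrable functions on `ℝ` whose Fourier transform is supported in `[-δ, δ]`;
the class `ℰ` is `Bandlimited 1`. -/
structure Bandlimited (δ : ℝ) (F : ℝ → ℂ) : Prop where
  continuous : Continuous F
  integrable : Integrable F
  support_fourier_subset : Function.support (𝓕 F) ⊆ Icc (-δ) δ

lemma fourier_conj_s3 {V : Type*} [NormedAddCommGroup V] [InnerProductSpace ℝ V] [MeasurableSpace V]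
    [BorelSpace V] [FiniteDimensional ℝ V] (F : V → ℂ) (t : V) :
    𝓕 (fun x => conj (F x)) t = conj (𝓕 F (-t)) := by
  simp only [Real.fourier_eq', smul_eq_mul]
  rw [← integral_conj]
  refine integral_congr_ae (.of_forall fun x => ?_)
  simp [← Complex.exp_conj, conj_ofNat]

lemma integrable_of_norm_le_of_lt_abs {E E' : Type*} [NormedAddCommGroup E]
    [NormedAddCommGroup E'] {F : ℝ → E} {G : ℝ → E'} (hF : Integrable F) (hG : Continuous G)
    {R c : ℝ} (h : ∀ x, R < |x| → ‖G x‖ ≤ c * ‖F x‖) : Integrable G := by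
  have hfar : IntegrableOn G (Icc (-R) R)ᶜ :=
    (hF.norm.const_mul c).integrableOn.mono' hG.aestronglyMeasurable <|
      (ae_restrict_mem measurableSet_Icc.compl).mono fun x hx =>
        h x (not_le.1 fun hxR => hx (abs_le.1 hxR))
  simpa using (hG.continuousOn.integrableOn_Icc (a := -R) (b := R)).union hfar

namespace Bandlimited

variable {δ : ℝ} {F G : ℝ → ℂ}

lemma continuous_fourier (hF : Bandlimited δ F) : Continuous (𝓕 F) :=
  VectorFourier.fourierIntegral_continuous Real.continuous_fourierChar
    (by exact continuous_inner) hF.integrable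

lemma integrable_fourier (hF : Bandlimited δ F) : Integrable (𝓕 F) :=
  hF.continuous_fourier.integrable_of_hasCompactSupport
    (.of_support_subset_isCompact isCompact_Icc hF.support_fourier_subset)

lemma fourierInv_fourier_eq (hF : Bandlimited δ F) : 𝓕⁻ (𝓕 F) = F :=
  hF.continuous.fourierInv_fourier_eq hF.integrable hF.integrable_fourier

lemma add (hF : Bandlimited δ F) (hG : Bandlimited δ G) : Bandlimited δ fun x => F x + G x := by
  refine ⟨hF.continuous.add hG.continuous, hF.integrable.add hG.integrable, ?_⟩
  have hadd : 𝓕 (fun x => F x + G x) = 𝓕 F + 𝓕 G :=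
    VectorFourier.fourierIntegral_add Real.continuous_fourierChar (by exact continuous_inner)
      hF.integrable hG.integrable
  rw [hadd]
  exact (Function.support_add _ _).trans
    (union_subset hF.support_fourier_subset hG.support_fourier_subset)

lemma const_mul (hF : Bandlimited δ F) (c : ℂ) : Bandlimited δ fun x => c * F x := by
  refine ⟨hF.continuous.const_mul c, hF.integrable.const_mul c, ?_⟩
  have hsmul : 𝓕 (fun x => c * F x) = c • 𝓕 F :=
    VectorFourier.fourierIntegral_const_smul Real.fourierChar volume (innerₗ ℝ) F c
  rw [hsmul]
  exact (Function.support_const_smul_subset c _).trans hF.support_fourier_subset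

lemma map_conj (hF : Bandlimited δ F) : Bandlimited δ fun x => conj (F x) := by
  refine ⟨continuous_conj.comp hF.continuous, ?_, fun t ht => ?_⟩
  · exact (integrable_norm_iff (continuous_conj.comp hF.continuous).aestronglyMeasurable).1
      (by simpa using hF.integrable.norm)
  · have hmem : -t ∈ Icc (-δ) δ :=
      hF.support_fourier_subset (by simpa [fourier_conj_s3] using ht)
    exact ⟨neg_le.1 hmem.2, neg_le_neg_iff.1 hmem.1⟩

lemma comp_add (hF : Bandlimited δ F) (a : ℝ) : Bandlimited δ fun x => F (x + a) := by
  refine ⟨hF.continuous.comp (continuous_add_const a), hF.integrable.comp_add_right a,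
    fun t ht => hF.support_fourier_subset fun h => ht ?_⟩
  have hshift := congrFun (VectorFourier.fourierIntegral_comp_add_right Real.fourierChar volume
    (innerₗ ℝ) F a) t
  exact hshift.trans ((congrArg _ h).trans (smul_zero _))

lemma norm_apply_le (hF : Bandlimited δ F) (x : ℝ) :
    ‖F x‖ ≤ (∫ y, ‖F y‖) * volume.real (Icc (-δ) δ) := by
  have hset : 𝓕⁻ (𝓕 F) x = ∫ t in Icc (-δ) δ, Real.fourierChar (inner ℝ t x) • 𝓕 F t := by
    rw [Real.fourierInv_eq]
    refine (setIntegral_eq_integral_of_forall_compl_eq_zero fun t ht => ?_).symm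
    rw [Function.notMem_support.1 fun h => ht (hF.support_fourier_subset h), smul_zero]
  rw [← congrFun hF.fourierInv_fourier_eq x, hset]
  refine norm_setIntegral_le_of_norm_le_const measure_Icc_lt_top fun t _ => ?_
  rw [Circle.norm_smul]
  exact VectorFourier.norm_fourierIntegral_le_integral_norm _ _ _ F t

lemma integral_norm_pos (hF : Bandlimited δ F) (hne : F ≠ 0) : 0 < ∫ x, ‖F x‖ := by
  obtain ⟨x, hx⟩ := Function.ne_iff.1 hne
  exact integral_pos_of_integrable_nonneg_nonzero hF.continuous.norm hF.integrable.norm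
    (fun _ => norm_nonneg _) (norm_ne_zero_iff.2 hx)

lemma exists_isPaleyWiener (hF : Bandlimited δ F) :
    ∃ f, IsPaleyWiener δ f ∧ ∀ x : ℝ, F x = f x := by
  refine ⟨_, ⟨𝓕 F, hF.continuous_fourier, hF.support_fourier_subset, rfl⟩, fun x => ?_⟩
  rw [fourierLaplace_ofReal, hF.fourierInv_fourier_eq]

lemma isPaleyWiener {f : ℂ → ℂ} (hF : Bandlimited δ fun x : ℝ => f x)
    (hf : Differentiable ℂ f) : IsPaleyWiener δ f := by
  obtain ⟨g, hg, hfg⟩ := hF.exists_isPaleyWiener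
  exact eq_of_forall_ofReal_eq hf hg.differentiable hfg ▸ hg

end Bandlimited

lemma IsPaleyWiener.bandlimited {δ : ℝ} {f : ℂ → ℂ} (hf : IsPaleyWiener δ f)
    (hi : Integrable fun x : ℝ => f x) : Bandlimited δ fun x : ℝ => f x := by
  refine ⟨hf.differentiable.continuous.comp continuous_ofReal, hi, ?_⟩
  obtain ⟨φ, hφ, hs, rfl⟩ := hf
  have hφi : Integrable φ :=
    hφ.integrable_of_hasCompactSupport (.of_support_subset_isCompact isCompact_Icc hs)
  simp only [fourierLaplace_ofReal] at hi ⊢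
  have hFi : Integrable (𝓕 φ) := by
    simpa [Real.fourierInv_eq_fourier_neg] using hi.comp_neg
  rwa [hφ.fourier_fourierInv_eq hφi hFi]

end Bandlimited

section Extremizers

lemma ofReal_sq_mul_eq_smul {x : ℝ} {w : ℂ} (hx : x ≠ w.re) (c : ℂ) :
    (x : ℂ) ^ 2 * c =
      (x ^ 2 / ‖(x : ℂ) - w‖ ^ 2 : ℝ) • ((x - w) * ((x - conj w) * c)) := by
  have hne : (x : ℂ) - w ≠ 0 := sub_ne_zero.2 fun h => hx (by simp [← h])
  have hnorm : ((x : ℂ) - w) * (x - conj w) = (‖(x : ℂ) - w‖ : ℂ) ^ 2 := by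
    simpa using mul_conj' ((x : ℂ) - w)
  rw [← mul_assoc, hnorm, real_smul]
  have hnorm_ne : (‖(x : ℂ) - w‖ : ℂ) ≠ 0 := by simpa using hne
  push_cast
  field_simp

lemma norm_ofReal_sq_mul_le {x : ℝ} {w : ℂ} (hx : 2 * ‖w‖ < |x|) (c : ℂ) :
    ‖(x : ℂ) ^ 2 * c‖ ≤ 4 * ‖((x : ℂ) - w) * ((x - conj w) * c)‖ := by
  have hle {v : ℂ} (hv : ‖v‖ = ‖w‖) : |x| ≤ 2 * ‖(x : ℂ) - v‖ := by
    have hsub := norm_sub_norm_le (x : ℂ) v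
    rw [norm_real, Real.norm_eq_abs, hv] at hsub
    linarith
  calc ‖(x : ℂ) ^ 2 * c‖ = |x| * |x| * ‖c‖ := by simp [sq]
    _ ≤ 2 * ‖(x : ℂ) - w‖ * (2 * ‖(x : ℂ) - conj w‖) * ‖c‖ := by
        gcongr
        exacts [hle rfl, hle (norm_conj w)]
    _ = 4 * ‖((x : ℂ) - w) * ((x - conj w) * c)‖ := by
        rw [norm_mul, norm_mul]
        ring

/-- The admissible functions of the normalized extremal problem, in which the quotient
`‖F 0‖ / ‖F‖₁` is replaced by `‖F‖₁` under the constraint `F 0 = 1`. -/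
def unitBandlimited (δ : ℝ) : Set (ℝ → ℂ) :=
  {F | Bandlimited δ F ∧ F 0 = 1}

lemma convex_unitBandlimited (δ : ℝ) : Convex ℝ (unitBandlimited δ) := by
  intro F hF G hG a b _ _ hab
  have heq : a • F + b • G = fun x => a * F x + b * G x := by
    ext x
    simp
  refine heq ▸ ⟨(hF.1.const_mul a).add (hG.1.const_mul b), ?_⟩
  simpa [hF.2, hG.2] using mod_cast hab

/-- The functions of least `L¹` norm in `unitBandlimited δ`. -/
structure IsNormalizedExtremizer (δ : ℝ) (F : ℝ → ℂ) : Prop where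
  mem : F ∈ unitBandlimited δ
  isMinOn : IsMinOn (fun G => ∫ x, ‖G x‖) (unitBandlimited δ) F

lemma convex_setOf_isNormalizedExtremizer (δ : ℝ) : Convex ℝ {F | IsNormalizedExtremizer δ F} := by
  intro F hF G hG a b ha hb hab
  have hconv := convexOn_integral_norm (convex_unitBandlimited δ) fun F hF => hF.1.integrable
  refine ⟨hconv.1 hF.mem hG.mem ha hb hab, fun H hH => ?_⟩
  calc ∫ x, ‖(a • F + b • G) x‖
      ≤ a • (∫ x, ‖F x‖) + b • ∫ x, ‖G x‖ := hconv.2 hF.mem hG.mem ha hb hab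
    _ ≤ a • (∫ x, ‖H x‖) + b • ∫ x, ‖H x‖ :=
        add_le_add (smul_le_smul_of_nonneg_left (hF.isMinOn hH) ha)
          (smul_le_smul_of_nonneg_left (hG.isMinOn hH) hb)
    _ = ∫ x, ‖H x‖ := Convex.combo_self hab _

namespace IsNormalizedExtremizer

variable {δ : ℝ} {F G : ℝ → ℂ}

lemma norm_add_apply (hF : IsNormalizedExtremizer δ F) (hG : IsNormalizedExtremizer δ G) (x : ℝ) :
    ‖F x + G x‖ = ‖F x‖ + ‖G x‖ :=
  norm_add_eq_of_isMinOn_integral_norm (convex_unitBandlimited δ) (fun _ hH => hH.1.continuous)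
    (fun _ hH => hH.1.integrable) hF.mem hG.mem hF.isMinOn hG.isMinOn x

lemma map_conj (hF : IsNormalizedExtremizer δ F) :
    IsNormalizedExtremizer δ fun x => conj (F x) := by
  refine ⟨⟨hF.mem.1.map_conj, by simp [hF.mem.2]⟩, fun G hG => ?_⟩
  simpa using hF.isMinOn hG

lemma im_eq_zero (hF : IsNormalizedExtremizer δ F) (x : ℝ) : (F x).im = 0 := by
  have hadd := hF.norm_add_apply hF.map_conj x
  rw [add_conj, norm_conj, norm_real, Real.norm_eq_abs, abs_mul, abs_two, ← two_mul] at hadd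
  exact abs_re_eq_norm.1 (mul_left_cancel₀ two_ne_zero hadd)

lemma re_mul_nonneg (hF : IsNormalizedExtremizer δ F) (hG : IsNormalizedExtremizer δ G) (x : ℝ) :
    0 ≤ (F x * G x).re := by
  have hsq := norm_add_sq_real (F x) (G x)
  rw [hF.norm_add_apply hG, Complex.inner, conj_eq_iff_im.2 (hF.im_eq_zero x),
    mul_comm (G x)] at hsq
  nlinarith [mul_nonneg (norm_nonneg (F x)) (norm_nonneg (G x))]

lemma eq_zero_of_nonneg_smul (hF : IsNormalizedExtremizer δ F) (hG : Bandlimited δ G)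
    (hG0 : G 0 = 0) (hGF : ∀ᵐ x, ∃ h : ℝ, 0 ≤ h ∧ G x = h • F x) : G = 0 := by
  refine (hG.continuous.ae_eq_iff_eq volume continuous_zero).1
    (ae_eq_zero_of_integral_norm_le_integral_norm_sub_smul hF.mem.1.integrable hG.integrable hGF
      fun ε _ => ?_)
  have hmem : (fun x => F x - ε • G x) ∈ unitBandlimited δ :=
    ⟨by simpa [sub_eq_add_neg] using hF.mem.1.add (hG.const_mul (-ε)), by simp [hF.mem.2, hG0]⟩
  exact hF.isMinOn hmem

variable {f g : ℂ → ℂ}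

/-- If `f z = (z - w) (z - conj w) χ z`, then `z² χ z` is bandlimited and a nonnegative multiple of
`f` on the real line, but it vanishes at the origin. -/
lemma dslope_conj_ne_zero (hf : Differentiable ℂ f)
    (hF : IsNormalizedExtremizer δ fun x : ℝ => f x) {w : ℂ} (hw : f w = 0) :
    dslope f w (conj w) ≠ 0 := by
  intro hw'
  set χ := dslope (dslope f w) (conj w)
  have hχd : Differentiable ℂ χ := differentiable_dslope (differentiable_dslope hf w) _
  have hfactor (z : ℂ) : f z = (z - w) * ((z - conj w) * χ z) := by
    rw [eq_sub_mul_dslope hw z, eq_sub_mul_dslope hw' z]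
  have hPW : IsPaleyWiener δ fun z => z ^ 2 * χ z :=
    .sq_mul_of_sub_mul_sub_mul hχd.continuous ((funext hfactor) ▸ hF.mem.1.isPaleyWiener hf)
  have hint : Integrable fun x : ℝ => (x : ℂ) ^ 2 * χ x :=
    integrable_of_norm_le_of_lt_abs hF.mem.1.integrable
      (hPW.differentiable.continuous.comp continuous_ofReal)
      fun x hx => (norm_ofReal_sq_mul_le hx _).trans_eq (by rw [hfactor])
  have hzero := hF.eq_zero_of_nonneg_smul (hPW.bandlimited hint) (by simp) <| by
    filter_upwards [Measure.ae_ne volume w.re] with x hx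
    exact ⟨x ^ 2 / ‖(x : ℂ) - w‖ ^ 2, by positivity, by rw [hfactor, ofReal_sq_mul_eq_smul hx]⟩
  have hf0 : f = 0 := by
    have hsq : (fun z => z ^ 2 * χ z) = 0 :=
      eq_of_forall_ofReal_eq hPW.differentiable (differentiable_const 0) (congrFun hzero)
    have hχ0 : χ = 0 := hχd.continuous.ext_on (dense_compl_singleton 0) continuous_zero fun z hz =>
      (mul_eq_zero.1 (congrFun hsq z)).resolve_left (pow_ne_zero 2 hz)
    ext z
    simp [hfactor, hχ0]
  have hF0 := hF.mem.2
  simp [hf0] at hF0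

lemma im_eq_zero_of_root (hf : Differentiable ℂ f)
    (hF : IsNormalizedExtremizer δ fun x : ℝ => f x) {w : ℂ} (hw : f w = 0) : w.im = 0 := by
  have hconj := eq_sub_mul_dslope hw (conj w)
  rw [conj_apply_of_forall_ofReal_im_eq_zero hf hF.im_eq_zero, hw, map_zero] at hconj
  exact conj_eq_iff_im.1 (sub_eq_zero.1
    ((mul_eq_zero.1 hconj.symm).resolve_right (hF.dslope_conj_ne_zero hf hw)))

lemma deriv_ne_zero_of_root (hf : Differentiable ℂ f)
    (hF : IsNormalizedExtremizer δ fun x : ℝ => f x) {w : ℂ} (hw : f w = 0) : deriv f w ≠ 0 := by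
  have hne := hF.dslope_conj_ne_zero hf hw
  rwa [conj_eq_iff_im.2 (hF.im_eq_zero_of_root hf hw), dslope_same] at hne

/-- On the real line `f g ≥ 0`, so `f g` has a minimum at every real zero of `f`. -/
lemma apply_eq_zero_of_root (hf : Differentiable ℂ f) (hg : Differentiable ℂ g)
    (hF : IsNormalizedExtremizer δ fun x : ℝ => f x)
    (hG : IsNormalizedExtremizer δ fun x : ℝ => g x) {w : ℂ} (hw : f w = 0) : g w = 0 := by
  obtain ⟨x, rfl⟩ : ∃ x : ℝ, (x : ℂ) = w :=
    ⟨w.re, Complex.ext rfl (by simp [hF.im_eq_zero_of_root hf hw])⟩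
  have hderiv : HasDerivAt (fun y : ℝ => f y * g y) (deriv f x * g x) x := by
    simpa [hw] using ((hf x).hasDerivAt.mul (hg x).hasDerivAt).comp_ofReal
  have hre : (deriv f x * g x).re = 0 := by
    have hmin : IsLocalMin (fun y : ℝ => (f y * g y).re) x :=
      .of_forall fun y => by simpa [hw] using hF.re_mul_nonneg hG y
    exact hmin.hasDerivAt_eq_zero (reCLM.hasFDerivAt.comp_hasDerivAt x hderiv)
  have him : (deriv f x * g x).im = 0 := by
    have hconst : (fun y : ℝ => (f y * g y).im) = fun _ => 0 := by
      ext y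
      simp [hF.im_eq_zero y, hG.im_eq_zero y]
    have hderiv_im : HasDerivAt (fun y : ℝ => (f y * g y).im) (deriv f x * g x).im x :=
      imCLM.hasFDerivAt.comp_hasDerivAt x hderiv
    exact (hconst ▸ hderiv_im).unique (hasDerivAt_const x 0)
  exact (mul_eq_zero.1 (Complex.ext hre him)).resolve_left (hF.deriv_ne_zero_of_root hf hw)

/-- If `q z = -r ≤ 0`, the extremizer `(r f + g) / (r + 1)` has a double zero at `z`. -/
lemma quotient_mem_slitPlane (hf : Differentiable ℂ f)
    (hF : IsNormalizedExtremizer δ fun x : ℝ => f x)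
    (hG : IsNormalizedExtremizer δ fun x : ℝ => g x) {q : ℂ → ℂ} (hq : Differentiable ℂ q)
    (hgq : ∀ z, g z = q z * f z) (z : ℂ) : q z ∈ slitPlane := by
  by_contra hz
  simp only [mem_slitPlane_iff, not_or, not_lt, not_not] at hz
  obtain ⟨r, hr, hqr⟩ : ∃ r : ℝ, 0 ≤ r ∧ q z = -r :=
    ⟨-(q z).re, neg_nonneg.2 hz.1, Complex.ext (by simp) (by simp [hz.2])⟩
  have hr1 : (r : ℂ) + 1 ≠ 0 := mod_cast (by positivity : r + 1 ≠ 0)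
  set a : ℝ := r / (r + 1)
  set b : ℝ := 1 / (r + 1)
  set k : ℂ → ℂ := fun u => a + b * q u with hk
  have hkz : k z = 0 := by
    simp only [hk, a, b, hqr]
    push_cast
    field_simp
    ring
  have hkd : Differentiable ℂ k := by fun_prop
  have hkE : IsNormalizedExtremizer δ fun x : ℝ => k x * f x := by
    have hcombo : (fun x : ℝ => k x * f x) = a • (fun x : ℝ => f x) + b • fun x : ℝ => g x := by
      ext x
      simp [hk, hgq, add_mul, mul_assoc]
    rw [hcombo]
    exact convex_setOf_isNormalizedExtremizer δ hF hG (by positivity) (by positivity)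
      (by simp only [a, b]; field_simp)
  have hkf : k z * f z = 0 := by simp [hkz]
  have hfz : f z = 0 := hkE.apply_eq_zero_of_root (hkd.mul hf) hf hF hkf
  refine hkE.deriv_ne_zero_of_root (hkd.mul hf) hkf ?_
  rw [((hkd z).hasDerivAt.mul (hf z).hasDerivAt).deriv, hfz, hkz, mul_zero, zero_mul, add_zero]

theorem eq (hF : IsNormalizedExtremizer δ F) (hG : IsNormalizedExtremizer δ G) : F = G := by
  obtain ⟨f, hf, hFf⟩ := hF.mem.1.exists_isPaleyWiener
  obtain ⟨g, hg, hGg⟩ := hG.mem.1.exists_isPaleyWiener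
  obtain rfl : F = fun x : ℝ => f x := funext hFf
  obtain rfl : G = fun x : ℝ => g x := funext hGg
  have hfd := hf.differentiable
  have hgd := hg.differentiable
  obtain ⟨q, hq, hgq⟩ := exists_differentiable_eq_mul hfd hgd
    (fun w => hF.apply_eq_zero_of_root hfd hgd hG) (fun w => hF.deriv_ne_zero_of_root hfd)
  have hconst := apply_eq_apply_of_forall_mem_slitPlane hq
    (hF.quotient_mem_slitPlane hfd hG hq hgq)
  have hf0 : f 0 = 1 := by simpa using hF.mem.2
  have hg0 : g 0 = 1 := by simpa using hG.mem.2
  have hq0 : q 0 = 1 := by simpa [hf0, hg0] using (hgq 0).symm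
  ext x
  rw [hgq, hconst x 0, hq0, one_mul]

end IsNormalizedExtremizer

/-- The nonzero functions in `Bandlimited δ` maximizing `‖F 0‖ / ‖F‖₁`. -/
structure IsExtremizer (δ : ℝ) (F : ℝ → ℂ) : Prop where
  bandlimited : Bandlimited δ F
  ne_zero : F ≠ 0
  isMaxOn : IsMaxOn (fun G => ‖G 0‖ / ∫ x, ‖G x‖) {G | Bandlimited δ G} F

namespace IsExtremizer

variable {δ : ℝ} {F : ℝ → ℂ}

lemma apply_zero_ne_zero (hF : IsExtremizer δ F) : F 0 ≠ 0 := by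
  intro h0
  obtain ⟨a, ha⟩ := Function.ne_iff.1 hF.ne_zero
  have hshift := hF.bandlimited.comp_add a
  have hne : (fun x => F (x + a)) ≠ 0 := Function.ne_iff.2 ⟨0, by simpa using ha⟩
  have hpos : 0 < ‖F (0 + a)‖ / ∫ x, ‖F (x + a)‖ :=
    div_pos (norm_pos_iff.2 (by simpa using ha)) (hshift.integral_norm_pos hne)
  have hle : ‖F (0 + a)‖ / ∫ x, ‖F (x + a)‖ ≤ ‖F 0‖ / ∫ x, ‖F x‖ := hF.isMaxOn hshift
  exact hpos.not_ge (hle.trans_eq (by simp [h0]))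

lemma isNormalizedExtremizer (hF : IsExtremizer δ F) :
    IsNormalizedExtremizer δ fun x => (F 0)⁻¹ * F x := by
  have hF0 := hF.apply_zero_ne_zero
  refine ⟨⟨hF.bandlimited.const_mul _, inv_mul_cancel₀ hF0⟩, fun G ⟨hG, hG0⟩ => ?_⟩
  have hGpos := hG.integral_norm_pos fun h => by simp [h] at hG0
  have hle : ‖G 0‖ / ∫ x, ‖G x‖ ≤ ‖F 0‖ / ∫ x, ‖F x‖ := hF.isMaxOn hG
  rw [hG0, norm_one, div_le_div_iff₀ hGpos (hF.bandlimited.integral_norm_pos hF.ne_zero),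
    one_mul] at hle
  change ∫ x, ‖(F 0)⁻¹ * F x‖ ≤ ∫ x, ‖G x‖
  simp only [norm_mul, norm_inv]
  rwa [integral_const_mul, inv_mul_le_iff₀ (norm_pos_iff.2 hF0)]

end IsExtremizer

theorem extremizer_unique_general {δ : ℝ} {F₁ F₂ : ℝ → ℂ} (h₁ : IsExtremizer δ F₁)
    (h₂ : IsExtremizer δ F₂) : ∃ c : ℂ, c ≠ 0 ∧ F₂ = fun x => c * F₁ x := by
  have hne₁ := h₁.apply_zero_ne_zero
  have hne₂ := h₂.apply_zero_ne_zero
  refine ⟨F₂ 0 * (F₁ 0)⁻¹, mul_ne_zero hne₂ (inv_ne_zero hne₁), funext fun x => ?_⟩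
  have h := congrFun (h₁.isNormalizedExtremizer.eq h₂.isNormalizedExtremizer) x
  rw [mul_assoc, h, mul_inv_cancel_left₀ hne₂]

lemma isExtremizer_one_of_eq_ccalInf {F : ℝ → ℂ} (hF : Bandlimited 1 F) (hne : F ≠ 0)
    (hmax : ‖F 0‖ / ∫ x, ‖F x‖ = CcalInf) : IsExtremizer 1 F := by
  refine ⟨hF, hne, fun G hG => ?_⟩
  rcases eq_or_ne G 0 with rfl | hG0
  · simpa using by positivity
  change ‖G 0‖ / ∫ x, ‖G x‖ ≤ ‖F 0‖ / ∫ x, ‖F x‖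
  rw [hmax]
  refine le_csSup ⟨volume.real (Icc (-1 : ℝ) 1), ?_⟩
    ⟨G, hG.continuous, hG.integrable, hG0, hG.support_fourier_subset, rfl⟩
  rintro r ⟨H, hHc, hHi, -, hHs, rfl⟩
  exact div_le_of_le_mul₀ (integral_nonneg fun _ => norm_nonneg _) measureReal_nonneg
    ((Bandlimited.norm_apply_le ⟨hHc, hHi, hHs⟩ 0).trans_eq (mul_comm _ _))

end Extremizers

/-- Uniqueness of extremizers of 𝒞(∞) up to a nonzero complex scalar. -/
theorem extremizer_unique
    (F₁ F₂ : ℝ → ℂ)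
    (h₁c : Continuous F₁) (h₁i : Integrable F₁) (h₁0 : F₁ ≠ 0)
    (h₁s : Function.support (𝓕 F₁) ⊆ Set.Icc (-1 : ℝ) 1)
    (h₂c : Continuous F₂) (h₂i : Integrable F₂) (h₂0 : F₂ ≠ 0)
    (h₂s : Function.support (𝓕 F₂) ⊆ Set.Icc (-1 : ℝ) 1)
    (he₁ : ‖F₁ 0‖ / (∫ x : ℝ, ‖F₁ x‖) = CcalInf)
    (he₂ : ‖F₂ 0‖ / (∫ x : ℝ, ‖F₂ x‖) = CcalInf) :
    ∃ c : ℂ, c ≠ 0 ∧ F₂ = fun x => c * F₁ x :=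
  extremizer_unique_general (isExtremizer_one_of_eq_ccalInf ⟨h₁c, h₁i, h₁s⟩ h₁0 he₁)
    (isExtremizer_one_of_eq_ccalInf ⟨h₂c, h₂i, h₂s⟩ h₂0 he₂)
end

section
/- Let H : ℝ → ℝ be the continuous function H(x) = cos(2πx)/(1 − 16x²) (extended continuously to x = ±1/4). Then H ∈ L¹(ℝ), its Fourier transform is Ĥ(t) = (π/4)·cos(πt/2) for |t| ≤ 1 and Ĥ(t) = 0 for |t| > 1, its L¹-norm equals ‖H‖₁ = (π/4)·∫_{−1}^{1} (sin(πt))/(πt) dt, and consequently 𝒞(∞) ≥ c₀ := (4/π)·(∫_{−1}^{1} (sin(πt))/(πt) dt)^{−1}. -/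
open MeasureTheory Filter
open scoped FourierTransform Real

/- `H` is the inverse Fourier transform of `(π / 4) cos (πt / 2) 1_{[-1, 1]}`, which, unlike the
quotient `cos (2πx) / (1 - 16x²)`, makes sense at `x = ±1/4` and is a sum of two shifted `sinc`s.

For the `L¹` norm, let `s(x) = sign (cos (2πx))`, so that `|H| = sign (1 - 16x²) s H`. The Fourier
transform of `H` vanishes at the nonzero integers, so by Poisson summation the periodization of `H`
is constant and `∫ s H` is a multiple of `∫₀¹ s = 0`. Only twice the integral of `H` over
`[-1/4, 1/4]` remains, and there the two `sinc`s tile `[-π, π]`. -/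

lemma integral_periodic_smul_eq_intervalIntegral_smul_tsum {𝕜 E : Type*} [NormedField 𝕜]
    [NormedAddCommGroup E] [NormedSpace ℝ E] [NormedSpace 𝕜 E] {f : ℝ → E} {s : ℝ → 𝕜} {C : ℝ}
    (hf : Integrable f) (hs : AEStronglyMeasurable s) (hC : ∀ x, ‖s x‖ ≤ C)
    (hper : Function.Periodic s 1) :
    ∫ x, s x • f x = ∫ x in (0 : ℝ)..1, s x • ∑' n : ℤ, f (x + n) := by
  have hsf : Integrable (fun x => s x • f x) := hf.bdd_smul C hs (Eventually.of_forall hC)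
  have hunfold := hsf.hasSum_intervalIntegral_comp_add_int
  have hsummable := hsf.norm.hasSum_intervalIntegral_comp_add_int.summable
  simp only [intervalIntegral.integral_of_le zero_le_one] at hunfold hsummable ⊢
  have hswap := hasSum_integral_of_summable_integral_norm
    (fun n : ℤ => (hsf.comp_add_right (n : ℝ)).integrableOn) hsummable
  have hper_int (n : ℤ) (x : ℝ) : s (x + n) = s x := by simpa using hper.int_mul n x
  simpa only [hper_int, tsum_const_smul''] using hunfold.unique hswap

lemma tsum_comp_add_int_eq_fourier_zero {f : ℝ → ℂ} (hf : Continuous f) {b : ℝ} (hb : 1 < b)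
    (hdecay : f =O[cocompact ℝ] fun x => |x| ^ (-b)) (hvanish : ∀ n : ℤ, n ≠ 0 → 𝓕 f n = 0)
    (x : ℝ) :
    ∑' n : ℤ, f (x + n) = 𝓕 f 0 := by
  have hsummable : Summable fun n : ℤ => 𝓕 f n := (hasSum_single 0 hvanish).summable
  rw [Real.tsum_eq_tsum_fourier_of_rpow_decay_of_summable hf hb hdecay hsummable,
    tsum_eq_single 0 fun n hn => by rw [hvanish n hn, zero_mul]]
  simp

lemma integrable_of_isBigO_norm_rpow_neg {V E : Type*} [NormedAddCommGroup V] [NormedSpace ℝ V]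
    [FiniteDimensional ℝ V] [MeasurableSpace V] [BorelSpace V] [NormedAddCommGroup E]
    {μ : Measure V} [μ.IsAddHaarMeasure] {f : V → E} (hf : LocallyIntegrable f μ) {b : ℝ}
    (hb : Module.finrank ℝ V < b) (hdecay : f =O[cocompact V] fun x => ‖x‖ ^ (-b)) :
    Integrable f μ := by
  have hbracket : (fun x : V => ‖x‖ ^ (-b)) =O[cocompact V] fun x => (1 + ‖x‖) ^ (-b) := by
    refine Asymptotics.IsBigO.of_bound (2 ^ b) ?_
    filter_upwards [(tendsto_norm_cocompact_atTop (E := V)).eventually_ge_atTop 1] with x hx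
    have hb₀ : 0 ≤ b := (Nat.cast_nonneg _).trans hb.le
    have hx₀ : 0 < ‖x‖ := by linarith
    rw [Real.norm_of_nonneg (by positivity), Real.norm_of_nonneg (by positivity),
      Real.rpow_neg (by positivity), Real.rpow_neg (by positivity), ← div_eq_mul_inv,
      ← Real.div_rpow (by positivity) (by positivity), ← Real.inv_rpow (by positivity)]
    gcongr
    rw [inv_le_iff_one_le_mul₀ hx₀, div_mul_eq_mul_div, one_le_div (by positivity)]
    linarith
  exact hf.integrable_of_isBigO_cocompact (hdecay.trans hbracket)
    ((integrable_one_add_norm hb).integrableAtFilter _)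

lemma intervalIntegral_eq_zero_of_antiperiodic {E : Type*} [NormedAddCommGroup E]
    [NormedSpace ℝ E] {f : ℝ → E} {c : ℝ} (hf : Function.Antiperiodic f c) (a : ℝ) :
    ∫ x in a..a + 2 * c, f x = 0 := by
  have hshift := hf.periodic_two_mul.intervalIntegral_add_eq a (a + c)
  have hneg : ∫ x in a..a + 2 * c, f (x + c) = -∫ x in a..a + 2 * c, f x := by
    simp only [hf _, intervalIntegral.integral_neg]
  rw [intervalIntegral.integral_comp_add_right, add_right_comm, ← hshift] at hneg
  have := IsAddTorsionFree.of_isTorsionFree ℝ E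
  exact self_eq_neg.1 hneg

section Fourier

variable {V E : Type*} [NormedAddCommGroup V] [InnerProductSpace ℝ V] [FiniteDimensional ℝ V]
  [MeasurableSpace V] [BorelSpace V] [NormedAddCommGroup E] [NormedSpace ℂ E] [CompleteSpace E]
  {f : V → E}

lemma fourier_fourierInv_eq_of_integrable_fourierInv (hc : Continuous f) (hf : Integrable f)
    (hinv : Integrable (𝓕⁻ f)) : 𝓕 (𝓕⁻ f) = f :=
  hc.fourier_fourierInv_eq hf <| by
    simpa only [Real.fourierInv_eq_fourier_neg, neg_neg] using hinv.comp_neg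

lemma norm_le_measureReal_mul_integral_norm_of_support_fourier_subset {K : Set V}
    (hc : Continuous f) (hf : Integrable f) (hK : volume K ≠ ⊤)
    (hsupp : Function.support (𝓕 f) ⊆ K) (x : V) :
    ‖f x‖ ≤ volume.real K * ∫ v, ‖f v‖ := by
  have hbound (w : V) : ‖𝓕 f w‖ ≤ ∫ v, ‖f v‖ :=
    VectorFourier.norm_fourierIntegral_le_integral_norm _ _ _ _ _
  have hcont : Continuous (𝓕 f) :=
    VectorFourier.fourierIntegral_continuous Real.continuous_fourierChar
      (by exact continuous_inner) hf
  have hint : Integrable (𝓕 f) := (integrableOn_iff_integrable_of_support_subset hsupp).1 <|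
    Measure.integrableOn_of_bounded hK hcont.aestronglyMeasurable (Eventually.of_forall hbound)
  calc ‖f x‖ = ‖𝓕⁻ (𝓕 f) x‖ := by rw [hc.fourierInv_fourier_eq hf hint]
    _ ≤ ∫ w, ‖𝓕 f w‖ := VectorFourier.norm_fourierIntegral_le_integral_norm _ _ _ _ _
    _ = ∫ w in K, ‖𝓕 f w‖ := (setIntegral_eq_integral_of_forall_compl_eq_zero fun w hw => by
        rw [Function.notMem_support.1 fun h => hw (hsupp h), norm_zero]).symm
    _ ≤ volume.real K * ∫ v, ‖f v‖ := by
        rw [mul_comm]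
        refine (Real.le_norm_self _).trans (norm_setIntegral_le_of_norm_le_const hK.lt_top
          fun w _ => ?_)
        rw [norm_norm]
        exact hbound w

end Fourier

lemma div_integral_norm_le_CcalInf {F : ℝ → ℂ} (hc : Continuous F) (hF : Integrable F)
    (hne : F ≠ 0) (hsupp : Function.support (𝓕 F) ⊆ Set.Icc (-1) 1) :
    ‖F 0‖ / ∫ x, ‖F x‖ ≤ CcalInf := by
  refine le_csSup ⟨volume.real (Set.Icc (-1 : ℝ) 1), ?_⟩ ⟨F, hc, hF, hne, hsupp, rfl⟩
  rintro r ⟨G, hGc, hG, -, hGsupp, rfl⟩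
  exact div_le_of_le_mul₀ (integral_nonneg fun x => norm_nonneg _) measureReal_nonneg
    (norm_le_measureReal_mul_integral_norm_of_support_fourier_subset hGc hG
      measure_Icc_lt_top.ne hGsupp 0)

lemma self_mul_sinc (x : ℝ) : x * Real.sinc x = Real.sin x := by
  rcases eq_or_ne x 0 with rfl | hx
  · simp
  · rw [Real.sinc_of_ne_zero hx, mul_div_cancel₀ _ hx]

lemma integral_cexp_mul_I_eq_sinc (c r : ℝ) :
    ∫ t in -r..r, Complex.exp ((c * t : ℝ) * Complex.I) = 2 * r * Real.sinc (c * r) := by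
  rcases eq_or_ne c 0 with rfl | hc
  · simp [two_mul]
  · rw [intervalIntegral.integral_comp_mul_left (fun u : ℝ => Complex.exp (u * Complex.I)) hc,
      mul_neg, integral_exp_mul_I_eq_sinc, Complex.real_smul]
    have : (c : ℂ) ≠ 0 := Complex.ofReal_ne_zero.2 hc
    push_cast
    field_simp

lemma integral_sin_mul_div_mul_eq_integral_sinc_mul {c : ℝ} (hc : c ≠ 0) (a b : ℝ) :
    ∫ t in a..b, Real.sin (c * t) / (c * t) = ∫ t in a..b, Real.sinc (c * t) := by
  refine intervalIntegral.integral_congr_ae ?_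
  filter_upwards [Measure.ae_ne volume (0 : ℝ)] with t ht _
  rw [Real.sinc_of_ne_zero (mul_ne_zero hc ht)]

/-- The truncated cosine `(π / 4) cos (πt / 2)` on `[-1, 1]`, extended by zero: the Fourier
transform of `cosQuotient`. -/
noncomputable def cosBump (t : ℝ) : ℝ := if |t| ≤ 1 then π / 4 * Real.cos (π * t / 2) else 0

lemma cosBump_of_abs_le_one {t : ℝ} (ht : |t| ≤ 1) : cosBump t = π / 4 * Real.cos (π * t / 2) :=
  if_pos ht

lemma cosBump_of_one_le_abs {t : ℝ} (ht : 1 ≤ |t|) : cosBump t = 0 := by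
  rcases ht.eq_or_lt with h | h
  · rw [cosBump_of_abs_le_one h.ge]
    rcases eq_or_eq_neg_of_abs_eq h.symm with rfl | rfl <;> simp [neg_div]
  · exact if_neg h.not_ge

@[fun_prop]
lemma continuous_cosBump : Continuous cosBump :=
  Continuous.if_le (by fun_prop) continuous_const continuous_abs continuous_const fun t ht => by
    rw [← cosBump_of_abs_le_one ht.le, cosBump_of_one_le_abs ht.ge]

lemma support_cosBump_subset : Function.support cosBump ⊆ Set.Ioc (-1) 1 := fun t ht => by
  have : |t| < 1 := not_le.1 fun h => ht (cosBump_of_one_le_abs h)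
  exact ⟨(abs_lt.1 this).1, (abs_lt.1 this).2.le⟩

lemma integrable_cosBump : Integrable cosBump :=
  continuous_cosBump.integrable_of_hasCompactSupport <|
    HasCompactSupport.of_support_subset_isCompact isCompact_Icc
      (support_cosBump_subset.trans Set.Ioc_subset_Icc_self)

/-- The continuous extension of `cos (2πx) / (1 - 16x²)` to the whole line, written as a sum of two
shifted `sinc`s so that no value has to be prescribed at `x = ±1/4`. -/
noncomputable def cosQuotient (x : ℝ) : ℝ :=
  π / 4 * (Real.sinc (2 * π * x + π / 2) + Real.sinc (2 * π * x - π / 2))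

@[fun_prop]
lemma continuous_cosQuotient : Continuous cosQuotient := by
  unfold cosQuotient
  fun_prop

lemma one_sub_mul_cosQuotient (x : ℝ) :
    (1 - 16 * x ^ 2) * cosQuotient x = Real.cos (2 * π * x) := by
  have hplus := self_mul_sinc (2 * π * x + π / 2)
  have hminus := self_mul_sinc (2 * π * x - π / 2)
  rw [Real.sin_add_pi_div_two] at hplus
  rw [Real.sin_sub_pi_div_two] at hminus
  rw [cosQuotient]
  linear_combination (1 - 4 * x) / 2 * hplus - (1 + 4 * x) / 2 * hminus

lemma cosQuotient_zero : cosQuotient 0 = 1 := by simpa using one_sub_mul_cosQuotient 0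

lemma finite_setOf_one_sub_sixteen_mul_sq_eq_zero : {x : ℝ | 1 - 16 * x ^ 2 = 0}.Finite := by
  refine (Set.toFinite {1 / 4, -(1 / 4)}).subset fun x (hx : 1 - 16 * x ^ 2 = 0) => ?_
  exact sq_eq_sq_iff_eq_or_eq_neg.1 (by linarith)

lemma eq_cosQuotient {H : ℝ → ℝ} (hc : Continuous H)
    (hH : ∀ x, 1 - 16 * x ^ 2 ≠ 0 → H x = Real.cos (2 * π * x) / (1 - 16 * x ^ 2)) :
    H = cosQuotient :=
  hc.ext_on (finite_setOf_one_sub_sixteen_mul_sq_eq_zero.countable.dense_compl ℝ)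
    continuous_cosQuotient fun x hx => by
      rw [hH x hx, ← one_sub_mul_cosQuotient, mul_div_cancel_left₀ _ hx]

lemma isBigO_cosQuotient : cosQuotient =O[cocompact ℝ] fun x => |x| ^ (-2 : ℝ) := by
  refine Asymptotics.IsBigO.of_bound 1 ?_
  filter_upwards [(tendsto_norm_cocompact_atTop (E := ℝ)).eventually_ge_atTop 1] with x hx
  have hx' : 1 ≤ x ^ 2 := (one_le_sq_iff_one_le_abs x).2 hx
  rw [one_mul, Real.rpow_neg (abs_nonneg x), Real.rpow_two, sq_abs, norm_inv, norm_pow,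
    Real.norm_eq_abs, Real.norm_eq_abs, sq_abs, ← one_div, le_div_iff₀ (by positivity), mul_comm]
  calc x ^ 2 * |cosQuotient x| ≤ |1 - 16 * x ^ 2| * |cosQuotient x| := by
        gcongr
        exact le_abs.2 (Or.inr (by linarith))
    _ = |Real.cos (2 * π * x)| := by rw [← abs_mul, one_sub_mul_cosQuotient]
    _ ≤ 1 := Real.abs_cos_le_one _

lemma integrable_cosQuotient : Integrable cosQuotient :=
  integrable_of_isBigO_norm_rpow_neg continuous_cosQuotient.locallyIntegrable (by simp)
    isBigO_cosQuotient

lemma cexp_mul_cosBump (x : ℝ) {t : ℝ} (ht : |t| ≤ 1) :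
    Complex.exp ((2 * π * inner ℝ t x : ℝ) * Complex.I) * cosBump t =
      π / 8 * (Complex.exp (((2 * π * x + π / 2) * t : ℝ) * Complex.I) +
        Complex.exp (((2 * π * x - π / 2) * t : ℝ) * Complex.I)) := by
  have hplus : (((2 * π * x + π / 2) * t : ℝ) : ℂ) * Complex.I =
      (2 * π * inner ℝ t x : ℝ) * Complex.I + (π * t / 2 : ℝ) * Complex.I := by
    simp only [RCLike.inner_apply, conj_trivial]
    push_cast
    ring
  have hminus : (((2 * π * x - π / 2) * t : ℝ) : ℂ) * Complex.I =
      (2 * π * inner ℝ t x : ℝ) * Complex.I + -(π * t / 2 : ℝ) * Complex.I := by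
    simp only [RCLike.inner_apply, conj_trivial]
    push_cast
    ring
  rw [cosBump_of_abs_le_one ht, hplus, hminus, Complex.exp_add, Complex.exp_add,
    Complex.ofReal_mul (π / 4), Complex.ofReal_cos, Complex.cos]
  push_cast
  ring

lemma fourierInv_cosBump :
    𝓕⁻ (fun t => (cosBump t : ℂ)) = fun x => (cosQuotient x : ℂ) := by
  ext x
  have hsupp : Function.support (fun t : ℝ =>
      Complex.exp ((2 * π * inner ℝ t x : ℝ) * Complex.I) * (cosBump t : ℂ)) ⊆ Set.Ioc (-1) 1 :=
    (Function.support_mul_subset_right _ _).trans fun t ht =>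
      support_cosBump_subset (Complex.ofReal_ne_zero.1 ht)
  simp only [Real.fourierInv_eq', smul_eq_mul]
  rw [← intervalIntegral.integral_eq_integral_of_support_subset hsupp,
    intervalIntegral.integral_congr fun t ht => cexp_mul_cosBump x <|
      abs_le.2 (by rwa [Set.uIcc_of_le (by norm_num)] at ht),
    intervalIntegral.integral_const_mul, intervalIntegral.integral_add
      (Continuous.intervalIntegrable (by fun_prop) _ _)
      (Continuous.intervalIntegrable (by fun_prop) _ _),
    integral_cexp_mul_I_eq_sinc, integral_cexp_mul_I_eq_sinc, mul_one, mul_one, cosQuotient]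
  push_cast
  ring

lemma fourier_cosQuotient :
    𝓕 (fun x => (cosQuotient x : ℂ)) = fun t => (cosBump t : ℂ) := by
  rw [← fourierInv_cosBump]
  refine fourier_fourierInv_eq_of_integrable_fourierInv (by fun_prop) integrable_cosBump.ofReal ?_
  rw [fourierInv_cosBump]
  exact integrable_cosQuotient.ofReal

lemma tsum_cosQuotient_add_int (x : ℝ) : ∑' n : ℤ, cosQuotient (x + n) = π / 4 := by
  have hvanish (n : ℤ) (hn : n ≠ 0) : 𝓕 (fun x => (cosQuotient x : ℂ)) n = 0 := by
    simp only [fourier_cosQuotient, Complex.ofReal_eq_zero]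
    exact cosBump_of_one_le_abs (by exact_mod_cast Int.one_le_abs hn)
  have h := tsum_comp_add_int_eq_fourier_zero (by fun_prop) one_lt_two
    (Complex.isBigO_ofReal_left.2 isBigO_cosQuotient) hvanish x
  simp only [fourier_cosQuotient, cosBump_of_abs_le_one (t := 0) (by simp)] at h
  rw [← Complex.ofReal_tsum] at h
  simpa using Complex.ofReal_injective h

/-- The square wave `sign (cos (2πx))`, of period `1`, which carries the sign of `cosQuotient` up to
the sign of `1 - 16x²`. -/
noncomputable def squareWave (x : ℝ) : ℝ := SignType.sign (Real.cos (2 * π * x))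

lemma norm_squareWave_le_one (x : ℝ) : ‖squareWave x‖ ≤ 1 := by
  unfold squareWave
  cases SignType.sign (Real.cos (2 * π * x)) <;> simp

lemma measurable_squareWave : Measurable squareWave := by
  have hcoe : Monotone ((↑) : SignType → ℝ) := fun a b => by
    cases a <;> cases b <;>
      norm_num [SignType.neg_eq_neg_one, show (0 : SignType) ≠ -1 by decide]
  exact (hcoe.comp SignType.sign.monotone).measurable.comp (by fun_prop)

lemma antiperiodic_squareWave : Function.Antiperiodic squareWave (1 / 2) := fun x => by
  rw [squareWave, show 2 * π * (x + 1 / 2) = 2 * π * x + π by ring, Real.cos_add_pi,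
    Left.sign_neg, SignType.coe_neg, squareWave]

lemma periodic_squareWave : Function.Periodic squareWave 1 := by
  simpa using antiperiodic_squareWave.periodic_two_mul

lemma integrable_squareWave_mul_cosQuotient : Integrable fun x => squareWave x * cosQuotient x :=
  integrable_cosQuotient.bdd_mul measurable_squareWave.aestronglyMeasurable
    (Eventually.of_forall norm_squareWave_le_one)

lemma integral_squareWave_mul_cosQuotient : ∫ x, squareWave x * cosQuotient x = 0 := by
  have hzero : ∫ x in (0 : ℝ)..1, squareWave x = 0 := by
    simpa using intervalIntegral_eq_zero_of_antiperiodic antiperiodic_squareWave 0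
  have hunfold := integral_periodic_smul_eq_intervalIntegral_smul_tsum integrable_cosQuotient
    measurable_squareWave.aestronglyMeasurable norm_squareWave_le_one periodic_squareWave
  simpa only [smul_eq_mul, tsum_cosQuotient_add_int, intervalIntegral.integral_mul_const, hzero,
    zero_mul] using hunfold

lemma squareWave_mul_cosQuotient (x : ℝ) :
    squareWave x * cosQuotient x = SignType.sign (1 - 16 * x ^ 2) * |cosQuotient x| := by
  rw [squareWave, ← one_sub_mul_cosQuotient, sign_mul, SignType.coe_mul, mul_assoc, sign_mul_self]

lemma cosQuotient_nonneg {x : ℝ} (hx : 0 < 1 - 16 * x ^ 2) : 0 ≤ cosQuotient x := by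
  refine nonneg_of_mul_nonneg_right ?_ hx
  have hx' : |x| < 1 / 4 := sq_lt_sq₀ (abs_nonneg x) (by norm_num) |>.1 (by rw [sq_abs]; linarith)
  rw [one_sub_mul_cosQuotient]
  refine Real.cos_nonneg_of_mem_Icc ⟨?_, ?_⟩ <;>
    nlinarith [Real.pi_pos, (abs_lt.1 hx').1, (abs_lt.1 hx').2]

lemma abs_cosQuotient_eq_indicator_sub {x : ℝ} (hx : 1 - 16 * x ^ 2 ≠ 0) :
    |cosQuotient x| = 2 * (Set.Ioc (-(1 / 4)) (1 / 4)).indicator cosQuotient x -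
      squareWave x * cosQuotient x := by
  rw [squareWave_mul_cosQuotient]
  rcases hx.lt_or_gt with hneg | hpos
  · have hmem : x ∉ Set.Ioc (-(1 / 4)) (1 / 4) := fun h => by nlinarith [h.1, h.2]
    rw [Set.indicator_of_notMem hmem, sign_neg hneg, SignType.coe_neg_one]
    ring
  · have hmem : x ∈ Set.Ioc (-(1 / 4)) (1 / 4) := ⟨by nlinarith, by nlinarith⟩
    rw [Set.indicator_of_mem hmem, sign_pos hpos, abs_of_nonneg (cosQuotient_nonneg hpos)]
    simp only [SignType.coe_one]
    ring

lemma integral_cosQuotient_quarter :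
    ∫ x in -(1 / 4 : ℝ)..1 / 4, cosQuotient x =
      π / 8 * ∫ t in (-1 : ℝ)..1, Real.sin (π * t) / (π * t) := by
  have hsinc (a b : ℝ) : IntervalIntegrable Real.sinc volume a b :=
    Real.continuous_sinc.intervalIntegrable a b
  have hplus : ∫ x in -(1 / 4 : ℝ)..1 / 4, Real.sinc (2 * π * x + π / 2) =
      (2 * π)⁻¹ * ∫ u in (0 : ℝ)..π, Real.sinc u := by
    rw [intervalIntegral.integral_comp_mul_add _ (by positivity), smul_eq_mul]
    ring_nf
  have hminus : ∫ x in -(1 / 4 : ℝ)..1 / 4, Real.sinc (2 * π * x - π / 2) =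
      (2 * π)⁻¹ * ∫ u in -π..0, Real.sinc u := by
    rw [intervalIntegral.integral_comp_mul_sub _ (by positivity), smul_eq_mul]
    ring_nf
  simp only [cosQuotient]
  rw [intervalIntegral.integral_const_mul, intervalIntegral.integral_add
      (Continuous.intervalIntegrable (by fun_prop) _ _)
      (Continuous.intervalIntegrable (by fun_prop) _ _), hplus, hminus, add_comm, ← mul_add,
    intervalIntegral.integral_add_adjacent_intervals (hsinc _ _) (hsinc _ _),
    integral_sin_mul_div_mul_eq_integral_sinc_mul Real.pi_ne_zero,
    intervalIntegral.integral_comp_mul_left _ Real.pi_ne_zero, mul_neg, mul_one, smul_eq_mul]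
  ring

lemma integral_abs_cosQuotient :
    ∫ x, |cosQuotient x| = π / 4 * ∫ t in (-1 : ℝ)..1, Real.sin (π * t) / (π * t) := by
  have hae : ∀ᵐ x : ℝ, |cosQuotient x| =
      2 * (Set.Ioc (-(1 / 4)) (1 / 4)).indicator cosQuotient x - squareWave x * cosQuotient x :=
    (finite_setOf_one_sub_sixteen_mul_sq_eq_zero.countable.ae_notMem volume).mono
      fun x hx => abs_cosQuotient_eq_indicator_sub hx
  rw [integral_congr_ae hae, integral_sub
      ((integrable_cosQuotient.indicator measurableSet_Ioc).const_mul 2)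
      integrable_squareWave_mul_cosQuotient,
    integral_squareWave_mul_cosQuotient, integral_const_mul, integral_indicator measurableSet_Ioc,
    ← intervalIntegral.integral_of_le (by norm_num), integral_cosQuotient_quarter]
  ring

lemma support_fourier_cosQuotient_subset :
    Function.support (𝓕 fun x => (cosQuotient x : ℂ)) ⊆ Set.Icc (-1) 1 := by
  rw [fourier_cosQuotient]
  exact fun t ht => Set.Ioc_subset_Icc_self (support_cosBump_subset (Complex.ofReal_ne_zero.1 ht))

lemma inv_integral_abs_cosQuotient_le_CcalInf : (∫ x, |cosQuotient x|)⁻¹ ≤ CcalInf := by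
  have hne : (fun x => (cosQuotient x : ℂ)) ≠ 0 := fun h => by
    simpa [cosQuotient_zero] using congrFun h 0
  simpa [cosQuotient_zero] using div_integral_norm_le_CcalInf (by fun_prop)
    integrable_cosQuotient.ofReal hne support_fourier_cosQuotient_subset

/-- Properties of H(x) = cos(2πx)/(1 − 16x²) and the resulting lower bound for 𝒞(∞). -/
theorem H_properties_and_lower_bound
    (H : ℝ → ℝ) (hHc : Continuous H)
    (hHval : ∀ x : ℝ, 1 - 16 * x ^ 2 ≠ 0 → H x = Real.cos (2 * π * x) / (1 - 16 * x ^ 2)) :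
    Integrable H ∧
    (∀ t : ℝ, |t| ≤ 1 →
      𝓕 (fun x => (H x : ℂ)) t = ((π / 4 * Real.cos (π * t / 2) : ℝ) : ℂ)) ∧
    (∀ t : ℝ, 1 < |t| → 𝓕 (fun x => (H x : ℂ)) t = 0) ∧
    (∫ x : ℝ, |H x|) = π / 4 * ∫ t in (-1 : ℝ)..1, Real.sin (π * t) / (π * t) ∧
    4 / π * (∫ t in (-1 : ℝ)..1, Real.sin (π * t) / (π * t))⁻¹ ≤ CcalInf := by
  obtain rfl : H = cosQuotient := eq_cosQuotient hHc hHval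
  refine ⟨integrable_cosQuotient, fun t ht => ?_, fun t ht => ?_, integral_abs_cosQuotient, ?_⟩
  · simp only [fourier_cosQuotient, cosBump_of_abs_le_one ht]
  · simp only [fourier_cosQuotient, cosBump_of_one_le_abs ht.le, Complex.ofReal_zero]
  · rw [← inv_div π 4, ← mul_inv, ← integral_abs_cosQuotient]
    exact inv_integral_abs_cosQuotient_le_CcalInf
end
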